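/- arXiv:1610.03712 — 5 statements merged into one kernel-verified Lean document; each statement's English description precedes it below -/
import Mathlib

section
/- Let F₂ be the free group on generators x, y and let α be the automorphism of F₂ determined by α(x) = x and α(y) = yx. Then for every p equal to zero or a prime, there exist a field F of characteristic p and an injective group homomorphism from the semidirect product F₂ ⋊_α ℤ into GL(6,F). -/
open scoped MatrixGroups

namespace ParabolicEmb

/-- The value group. -/
abbrev Gam := ℤ ×ₗ ℤ

section rep

variable {K : Type} [Field K]

/-- The image of the stable letter `t`. -/
def matT (a : K) : Matrix (Fin 6) (Fin 6) K :=
  Matrix.diagonal ![1, 1, a, a, 1, 1]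

/-- The image of `x`. -/
def matX (a : K) : Matrix (Fin 6) (Fin 6) K :=
  Matrix.diagonal ![1, a, a⁻¹, 1, 1, 1]

/-- The image of `y`. -/
def matY (s : K) : Matrix (Fin 6) (Fin 6) K :=
  !![s⁻¹, 0, s⁻¹, 0, 0, 0;
     s⁻¹, 0, s⁻¹ * (1 + s ^ 4), 0, 0, 0;
     0, 1, 0, 1, 0, 0;
     0, 1, 0, 1 + s, 0, 0;
     0, 0, 0, 0, 1, 0;
     0, 0, 0, 0, 0, 1]

/-- The image of `y⁻¹`. -/
def matYi (s : K) : Matrix (Fin 6) (Fin 6) K :=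
  !![s⁻¹ ^ 3 * (1 + s ^ 4), -s⁻¹ ^ 3, 0, 0, 0, 0;
     0, 0, s⁻¹ * (1 + s), -s⁻¹, 0, 0;
     -s⁻¹ ^ 3, s⁻¹ ^ 3, 0, 0, 0, 0;
     0, 0, -s⁻¹, s⁻¹, 0, 0;
     0, 0, 0, 0, 1, 0;
     0, 0, 0, 0, 0, 1]

theorem matY_mul (s : K) (hs : s ≠ 0) : matY s * matYi s = 1 := by
  ext i j
  fin_cases i <;> fin_cases j <;>
    simp [matY, matYi, Matrix.mul_apply, Fin.sum_univ_succ] <;> field_simp <;> ring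

/-- `t` as an invertible matrix. -/
def uT (a : K) (ha : a ≠ 0) : GL (Fin 6) K where
  val := matT a
  inv := matT a⁻¹
  val_inv := by
    ext i j
    fin_cases i <;> fin_cases j <;> simp [matT, ha]
  inv_val := by
    ext i j
    fin_cases i <;> fin_cases j <;> simp [matT, ha]

/-- `x` as an invertible matrix. -/
def uX (a : K) (ha : a ≠ 0) : GL (Fin 6) K where
  val := matX a
  inv := matX a⁻¹
  val_inv := by
    ext i j
    fin_cases i <;> fin_cases j <;> simp [matX, ha]
  inv_val := by
    ext i j
    fin_cases i <;> fin_cases j <;> simp [matX, ha]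

/-- `y` as an invertible matrix. -/
def uY (s : K) (hs : s ≠ 0) : GL (Fin 6) K where
  val := matY s
  inv := matYi s
  val_inv := matY_mul s hs
  inv_val := mul_eq_one_comm.mp (matY_mul s hs)

theorem rel_TX (a : K) (ha : a ≠ 0) : uT a ha * uX a ha = uX a ha * uT a ha := by
  ext i j
  fin_cases i <;> fin_cases j <;> simp [uT, uX, matT, matX, ha]

theorem rel_TY (a s : K) (ha : a ≠ 0) (hs : s ≠ 0) :
    uT a ha * uY s hs = uY s hs * uX a ha * uT a ha := by
  ext i j
  change (matT a * matY s) i j = (matY s * matX a * matT a) i j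
  simp only [matT, matX, Matrix.diagonal_mul, Matrix.mul_diagonal]
  fin_cases i <;> fin_cases j <;> simp [matY, ha, mul_comm]

end rep

section valuation

variable {K : Type} [Field K] (v : AddValuation K (WithTop Gam))

/-- `x` has value `(n, m)`. -/
def Val (x : K) (n m : ℤ) : Prop := v x = ((toLex (n, m) : Gam) : WithTop Gam)

variable {v}

theorem Val.mul {x y : K} {n m n' m' : ℤ} (hx : Val v x n m) (hy : Val v y n' m') :
    Val v (x * y) (n + n') (m + m') := by
  unfold Val at *
  rw [AddValuation.map_mul, hx, hy]
  rfl

theorem Val.neg {x : K} {n m : ℤ} (hx : Val v x n m) : Val v (-x) n m := by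
  unfold Val at *
  rw [AddValuation.map_neg, hx]

theorem Val.one : Val v (1 : K) 0 0 := by
  unfold Val
  rw [AddValuation.map_one]
  rfl

theorem Val.ne {x : K} {n m : ℤ} (hx : Val v x n m) : x ≠ 0 := by
  rintro rfl
  unfold Val at hx
  rw [AddValuation.map_zero] at hx
  exact absurd hx (WithTop.top_ne_coe)

theorem Val.unique {x : K} {n m n' m' : ℤ} (hx : Val v x n m) (hy : Val v x n' m') :
    n = n' ∧ m = m' := by
  unfold Val at *
  rw [hx] at hy
  have h := WithTop.coe_injective hy
  have h' := toLex.injective h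
  simpa using h'

theorem Val.exists {x : K} (hx : x ≠ 0) : ∃ n m, Val v x n m := by
  have h : v x ≠ ⊤ := fun h => hx ((AddValuation.top_iff v).1 h)
  obtain ⟨g, hg⟩ := WithTop.ne_top_iff_exists.1 h
  exact ⟨(ofLex g).1, (ofLex g).2, hg.symm⟩

theorem Val.inv {x : K} {n m : ℤ} (hx : Val v x n m) : Val v x⁻¹ (-n) (-m) := by
  obtain ⟨n', m', h⟩ := Val.exists (v := v) (inv_ne_zero hx.ne)
  have h1 := hx.mul h
  rw [mul_inv_cancel₀ hx.ne] at h1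
  obtain ⟨h2, h3⟩ := h1.unique Val.one
  obtain rfl : n' = -n := by omega
  obtain rfl : m' = -m := by omega
  exact h

theorem Val.add_lt {x y : K} {n m n' m' : ℤ} (hx : Val v x n m) (hy : Val v y n' m')
    (h : n < n' ∨ n = n' ∧ m < m') : Val v (x + y) n m := by
  unfold Val at *
  rw [AddValuation.map_add_eq_of_lt_left, hx]
  rw [hx, hy, WithTop.coe_lt_coe, Prod.Lex.toLex_lt_toLex]
  exact h

/-- First and second component of the lexicographic minimum of `(n, m)` and `0`. -/
def mn (n m : ℤ) : ℤ := if n < 0 ∨ n = 0 ∧ m < 0 then n else 0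
/-- See `mn`. -/
def mm (n m : ℤ) : ℤ := if n < 0 ∨ n = 0 ∧ m < 0 then m else 0

theorem Val.comb {p q x y : K} {k l n m d e n' m' : ℤ} (hp : Val v p k l) (hq : Val v q k l)
    (hx : Val v x n m) (hy : Val v y n' m') (hn : n' = n + d) (hm : m' = m + e)
    (h : d ≠ 0 ∨ e ≠ 0) :
    Val v (p * x + q * y) (k + n + mn d e) (l + m + mm d e) := by
  subst hn hm
  unfold mn mm
  split_ifs with hd
  · rw [add_comm (p * x), add_assoc k, add_assoc l]
    exact (hq.mul hy).add_lt (hp.mul hx) (by omega)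
  · rw [add_zero, add_zero]
    exact (hp.mul hx).add_lt (hq.mul hy) (by omega)

/-- Product-form valuations of the first four coordinates. -/
def St (v : AddValuation K (WithTop Gam)) (w : Fin 6 → K) (nc mc nd md ne me : ℤ) : Prop :=
  Val v (w 0) nc mc ∧ Val v (w 1) (nc + ne) (mc + me) ∧ Val v (w 2) (nc + nd) (mc + md) ∧
    Val v (w 3) (nc + nd + ne) (mc + md + me)

theorem Val.cast {x : K} {n m n' m' : ℤ} (hx : Val v x n m) (h : n = n') (h' : m = m') :
    Val v x n' m' := by
  subst h h'; exact hx

theorem St.X {a : K} (ha : Val v a 1 0) {w : Fin 6 → K} {nc mc nd md ne me : ℤ}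
    (h : St v w nc mc nd md ne me) :
    St v ((matX a).mulVec w) nc mc (nd - 1) md (ne + 1) me := by
  obtain ⟨h0, h1, h2, h3⟩ := h
  refine ⟨?_, ?_, ?_, ?_⟩ <;> simp only [matX, Matrix.mulVec_diagonal]
  · exact (Val.one.mul h0).cast (by ring) (by ring)
  · exact (ha.mul h1).cast (by ring) (by ring)
  · exact (ha.inv.mul h2).cast (by ring) (by ring)
  · exact (Val.one.mul h3).cast (by ring) (by ring)

theorem St.Xi {a : K} (ha : Val v a 1 0) {w : Fin 6 → K} {nc mc nd md ne me : ℤ}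
    (h : St v w nc mc nd md ne me) :
    St v ((matX a⁻¹).mulVec w) nc mc (nd + 1) md (ne - 1) me := by
  obtain ⟨h0, h1, h2, h3⟩ := h
  refine ⟨?_, ?_, ?_, ?_⟩ <;> simp only [matX, Matrix.mulVec_diagonal]
  · exact (Val.one.mul h0).cast (by ring) (by ring)
  · exact (ha.inv.mul h1).cast (by ring) (by ring)
  · exact (ha.inv.inv.mul h2).cast (by ring) (by ring)
  · exact (Val.one.mul h3).cast (by ring) (by ring)

theorem val_s1 {s : K} (hs : Val v s 0 1) : Val v (1 + s) 0 0 :=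
  Val.one.add_lt hs (by omega)

theorem val_s4 {s : K} (hs : Val v s 0 1) : Val v (1 + s ^ 4) 0 0 := by
  have : s ^ 4 = s * s * (s * s) := by ring
  rw [this]
  exact Val.one.add_lt ((hs.mul hs).mul (hs.mul hs)) (by omega)

theorem val_i3 {s : K} (hs : Val v s 0 1) : Val v (s⁻¹ ^ 3) 0 (-3) := by
  have : s⁻¹ ^ 3 = s⁻¹ * s⁻¹ * s⁻¹ := by ring
  rw [this]
  exact (hs.inv.mul hs.inv).mul hs.inv

theorem St.Y {s : K} (hs : Val v s 0 1) {w : Fin 6 → K} {nc mc nd md ne me : ℤ}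
    (h : St v w nc mc nd md ne me) (hd : nd ≠ 0 ∨ md ≠ 0) :
    ∃ nc' mc', St v ((matY s).mulVec w) nc' mc' ne (me + 1) 0 0 := by
  obtain ⟨h0, h1, h2, h3⟩ := h
  have e0 : (matY s).mulVec w 0 = s⁻¹ * w 0 + s⁻¹ * w 2 := by
    simp [matY, Matrix.mulVec, dotProduct, Fin.sum_univ_succ]
  have e1 : (matY s).mulVec w 1 = s⁻¹ * w 0 + s⁻¹ * (1 + s ^ 4) * w 2 := by
    simp [matY, Matrix.mulVec, dotProduct, Fin.sum_univ_succ]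
  have e2 : (matY s).mulVec w 2 = 1 * w 1 + 1 * w 3 := by
    simp [matY, Matrix.mulVec, dotProduct, Fin.sum_univ_succ]
  have e3 : (matY s).mulVec w 3 = 1 * w 1 + (1 + s) * w 3 := by
    simp [matY, Matrix.mulVec, dotProduct, Fin.sum_univ_succ]
  have hi : Val v s⁻¹ 0 (-1) := hs.inv
  have hi4 : Val v (s⁻¹ * (1 + s ^ 4)) 0 (-1) := hi.mul (val_s4 hs)
  refine ⟨0 + nc + mn nd md, -1 + mc + mm nd md, ?_, ?_, ?_, ?_⟩
  · rw [e0]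
    exact hi.comb hi h0 h2 rfl rfl hd
  · rw [e1]
    exact (hi.comb hi4 h0 h2 rfl rfl hd).cast (by ring) (by ring)
  · rw [e2]
    exact (Val.one.comb Val.one h1 h3 (d := nd) (e := md) (by ring) (by ring) hd).cast
      (by ring) (by ring)
  · rw [e3]
    exact (Val.one.comb (val_s1 hs) h1 h3 (d := nd) (e := md) (by ring) (by ring) hd).cast
      (by ring) (by ring)

theorem St.Yi {s : K} (hs : Val v s 0 1) {w : Fin 6 → K} {nc mc nd md ne me : ℤ}
    (h : St v w nc mc nd md ne me) (hd : ne ≠ 0 ∨ me ≠ 0) :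
    ∃ nc' mc', St v ((matYi s).mulVec w) nc' mc' 0 0 nd (md + 2) := by
  obtain ⟨h0, h1, h2, h3⟩ := h
  have e0 : (matYi s).mulVec w 0 = s⁻¹ ^ 3 * (1 + s ^ 4) * w 0 + (-s⁻¹ ^ 3) * w 1 := by
    simp [matYi, Matrix.mulVec, dotProduct, Fin.sum_univ_succ]
  have e1 : (matYi s).mulVec w 1 = s⁻¹ * (1 + s) * w 2 + (-s⁻¹) * w 3 := by
    simp [matYi, Matrix.mulVec, dotProduct, Fin.sum_univ_succ]
  have e2 : (matYi s).mulVec w 2 = (-s⁻¹ ^ 3) * w 0 + s⁻¹ ^ 3 * w 1 := by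
    simp [matYi, Matrix.mulVec, dotProduct, Fin.sum_univ_succ]
  have e3 : (matYi s).mulVec w 3 = (-s⁻¹) * w 2 + s⁻¹ * w 3 := by
    simp [matYi, Matrix.mulVec, dotProduct, Fin.sum_univ_succ]
  have hi : Val v s⁻¹ 0 (-1) := hs.inv
  have hi1 : Val v (s⁻¹ * (1 + s)) 0 (-1) := hi.mul (val_s1 hs)
  have h3i := val_i3 hs
  have hi4 : Val v (s⁻¹ ^ 3 * (1 + s ^ 4)) 0 (-3) := h3i.mul (val_s4 hs)
  refine ⟨0 + nc + mn ne me, -3 + mc + mm ne me, ?_, ?_, ?_, ?_⟩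
  · rw [e0]
    exact hi4.comb h3i.neg h0 h1 rfl rfl hd
  · rw [e1]
    exact (hi1.comb hi.neg h2 h3 (d := ne) (e := me) (by ring) (by ring) hd).cast
      (by ring) (by ring)
  · rw [e2]
    exact (h3i.neg.comb h3i h0 h1 rfl rfl hd).cast (by ring) (by ring)
  · rw [e3]
    exact (hi.neg.comb hi h2 h3 (d := ne) (e := me) (by ring) (by ring) hd).cast
      (by ring) (by ring)

/-- The invariant of a vector obtained by applying a reduced word with first letter `l`. -/
def Cond (l : Fin 2 × Bool) (nd md ne me : ℤ) : Prop :=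
  0 ≤ md ∧ 0 ≤ me ∧
  (l = (1, true) → 1 ≤ md ∧ ne = 0 ∧ me = 0) ∧
  (l = (1, false) → 1 ≤ me ∧ nd = 0 ∧ md = 0) ∧
  (l = (0, true) → (1 ≤ md ∨ nd < 0) ∧ (1 ≤ me ∨ 0 < ne) ∧ (md = 0 ∨ me = 0 ∨ nd < 0)) ∧
  (l = (0, false) → (1 ≤ md ∨ 0 < nd) ∧ (1 ≤ me ∨ ne < 0) ∧ (md = 0 ∨ me = 0 ∨ 0 < nd))

/-- The generators' images. -/
def gens (a s : K) (ha : a ≠ 0) (hs : s ≠ 0) : Fin 2 → GL (Fin 6) K :=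
  ![uX a ha, uY s hs]

/-- The matrix of a letter. -/
def letter (a s : K) (ha : a ≠ 0) (hs : s ≠ 0) (x : Fin 2 × Bool) : GL (Fin 6) K :=
  bif x.2 then gens a s ha hs x.1 else (gens a s ha hs x.1)⁻¹

theorem letter_step {a s : K} (ha : Val v a 1 0) (hs : Val v s 0 1) (l : Fin 2 × Bool)
    {w : Fin 6 → K} {nc mc nd md ne me : ℤ} (h : St v w nc mc nd md ne me)
    (hc : (∃ l', (l.1 = l'.1 → l.2 = l'.2) ∧ Cond l' nd md ne me) ∨
      (nd = 0 ∧ md = 1 ∧ ne = 0 ∧ me = 1)) :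
    ∃ nc' mc' nd' md' ne' me',
      St v ((letter a s ha.ne hs.ne l).val.mulVec w) nc' mc' nd' md' ne' me' ∧
        Cond l nd' md' ne' me' := by
  have key : (0 ≤ md ∧ 0 ≤ me) ∧
      (l = (1, true) → nd ≠ 0 ∨ md ≠ 0) ∧ (l = (1, false) → ne ≠ 0 ∨ me ≠ 0) ∧
      (l = (0, true) → Cond l (nd - 1) md (ne + 1) me) ∧
      (l = (0, false) → Cond l (nd + 1) md (ne - 1) me) := by
    rcases hc with ⟨⟨i', b'⟩, hl, hc⟩ | hc
    · obtain ⟨i, b⟩ := l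
      fin_cases i <;> fin_cases i' <;> cases b <;> cases b' <;> simp [Cond] at hl hc ⊢ <;> omega
    · obtain ⟨i, b⟩ := l
      fin_cases i <;> cases b <;> simp [Cond] <;> omega
  obtain ⟨⟨hmd, hme⟩, k1, k2, k3, k4⟩ := key
  obtain ⟨i, b⟩ := l
  fin_cases i <;> cases b
  · exact ⟨_, _, _, _, _, _, h.Xi ha, k4 rfl⟩
  · exact ⟨_, _, _, _, _, _, h.X ha, k3 rfl⟩
  · obtain ⟨nc', mc', h'⟩ := h.Yi hs (k2 rfl)
    exact ⟨_, _, _, _, _, _, h', by simp [Cond]; omega⟩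
  · obtain ⟨nc', mc', h'⟩ := h.Y hs (k1 rfl)
    exact ⟨_, _, _, _, _, _, h', by simp [Cond]; omega⟩

theorem word_step {a s : K} (ha : Val v a 1 0) (hs : Val v s 0 1) {w : Fin 6 → K}
    {nc mc : ℤ} (h : St v w nc mc 0 1 0 1) :
    ∀ (L : List (Fin 2 × Bool)) (l : Fin 2 × Bool), FreeGroup.IsReduced (l :: L) →
    ∃ nc' mc' nd' md' ne' me',
      St v ((((l :: L).map (letter a s ha.ne hs.ne)).prod).val.mulVec w) nc' mc' nd' md' ne' me' ∧
        Cond l nd' md' ne' me' := by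
  intro L
  induction L with
  | nil =>
    intro l _
    simpa using letter_step ha hs l h (Or.inr ⟨rfl, rfl, rfl, rfl⟩)
  | cons l' L ih =>
    intro l hl
    rw [FreeGroup.isReduced_cons_cons] at hl
    obtain ⟨nc', mc', nd', md', ne', me', h1, h2⟩ := ih l' hl.2
    have := letter_step ha hs l h1 (Or.inl ⟨l', hl.1, h2⟩)
    rw [List.map_cons, List.prod_cons, Units.val_mul, ← Matrix.mulVec_mulVec]
    exact this

theorem lift_injective {a s : K} (ha : Val v a 1 0) (hs : Val v s 0 1) :
    Function.Injective (FreeGroup.lift (gens a s ha.ne hs.ne)) := by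
  rw [injective_iff_map_eq_one]
  intro g hg
  by_contra hne
  have hst : St v ![1, s, s, s * s, 0, 0] 0 0 0 1 0 1 :=
    ⟨Val.one, hs, hs, hs.mul hs⟩
  have hred := FreeGroup.isReduced_toWord (x := g)
  have hmk := FreeGroup.mk_toWord (x := g)
  generalize g.toWord = W at hred hmk
  cases W with
  | nil => exact hne hmk.symm
  | cons l L =>
    obtain ⟨nc, mc, nd, md, ne, me, h1, h2⟩ := word_step ha hs hst L l hred
    rw [← hmk, FreeGroup.lift_mk] at hg
    change ((l :: L).map (letter a s ha.ne hs.ne)).prod = 1 at hg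
    rw [hg, Units.val_one, Matrix.one_mulVec] at h1
    obtain ⟨p0, p1, p2, p3⟩ := h1
    obtain ⟨q0, q1, q2, q3⟩ := hst
    have r0 := p0.unique q0
    have r1 := p1.unique q1
    have r2 := p2.unique q2
    obtain ⟨i, b⟩ := l
    fin_cases i <;> cases b <;> simp [Cond] at h2 <;> omega

end valuation

theorem conj_pow {H : Type} [Group H] (α : MulAut (FreeGroup (Fin 2)))
    (f : FreeGroup (Fin 2) →* H) (T : H) (h : ∀ w, f (α w) = T * f w * T⁻¹) (n : ℤ) :
    ∀ w, f ((α ^ n) w) = T ^ n * f w * (T ^ n)⁻¹ := by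
  have hi : ∀ w, f (α⁻¹ w) = T⁻¹ * f w * T := by
    intro w
    have := h (α⁻¹ w)
    rw [MulAut.apply_inv_self] at this
    rw [this]; group
  induction n with
  | zero => intro w; simp
  | succ n ih =>
    intro w
    rw [zpow_add_one, MulAut.mul_apply, ih, h, zpow_add_one]
    group
  | pred n ih =>
    intro w
    rw [zpow_sub_one, MulAut.mul_apply, ih, hi, zpow_sub_one]
    group

theorem embed {H : Type} [Group H] (α : MulAut (FreeGroup (Fin 2)))
    (hx : α (FreeGroup.of 0) = FreeGroup.of 0)
    (hy : α (FreeGroup.of 1) = FreeGroup.of 1 * FreeGroup.of 0)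
    (f : FreeGroup (Fin 2) →* H) (hf : Function.Injective f) (T : H)
    (h : ∀ w, f (α w) = T * f w * T⁻¹) :
    ∃ ψ : (FreeGroup (Fin 2) ⋊[zpowersHom (MulAut (FreeGroup (Fin 2))) α]
          Multiplicative ℤ) →* H, Function.Injective ψ := by
  refine ⟨SemidirectProduct.lift f (zpowersHom H T) ?_, ?_⟩
  · intro g
    ext1 i
    exact conj_pow α f T h g.toAdd (FreeGroup.of i)
  · rw [injective_iff_map_eq_one]
    rintro ⟨w, g⟩ hw
    obtain ⟨n, rfl⟩ := Multiplicative.ofAdd.surjective g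
    have hw' : f w * T ^ n = 1 := by simpa [SemidirectProduct.lift] using hw
    let χ : FreeGroup (Fin 2) →* Multiplicative ℤ :=
      FreeGroup.lift ![Multiplicative.ofAdd 1, 1]
    have hα : (α ^ n) (FreeGroup.of 1) = FreeGroup.of 1 * FreeGroup.of 0 ^ n := by
      have hX : (α⁻¹ : MulAut _) (FreeGroup.of 0) = FreeGroup.of 0 := by
        conv_lhs => rw [← hx]
        exact MulAut.inv_apply_self _ _ _
      have hY : (α⁻¹ : MulAut _) (FreeGroup.of 1) = FreeGroup.of 1 * (FreeGroup.of 0)⁻¹ := by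
        rw [eq_mul_inv_iff_mul_eq]
        conv_lhs => rw [← hX, ← map_mul, ← hy]
        exact MulAut.inv_apply_self _ _ _
      have hXn : ∀ k : ℤ, (α ^ k) (FreeGroup.of 0) = FreeGroup.of 0 := by
        intro k
        induction k with
        | zero => simp
        | succ k ih => rw [zpow_add_one, MulAut.mul_apply, hx, ih]
        | pred k ih => rw [zpow_sub_one, MulAut.mul_apply, hX, ih]
      clear hw hw'
      induction n with
      | zero => simp
      | succ k ih =>
        rw [zpow_add_one, MulAut.mul_apply, hy, map_mul, ih, hXn, zpow_add_one, mul_assoc]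
      | pred k ih =>
        rw [zpow_sub_one, MulAut.mul_apply, hY, map_mul, ih, map_inv, hXn, zpow_sub_one,
          mul_assoc]
    have hc := conj_pow α f T h n (FreeGroup.of 1)
    have hT : T ^ n = f w⁻¹ := by
      rw [map_inv]; exact eq_inv_of_mul_eq_one_right hw'
    rw [hT, ← map_inv, ← map_mul, ← map_mul] at hc
    have hc' := congrArg χ (hf hc)
    rw [hα] at hc'
    have hn : n = 0 := by
      have : (Multiplicative.ofAdd (1 : ℤ)) ^ n = 1 := by
        simpa [χ, mul_comm] using hc'
      rw [← ofAdd_zsmul] at this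
      simpa using this
    subst hn
    have : w = 1 := by
      apply hf; simpa using hw'
    subst this
    rfl

theorem main_field (k : Type) [Field k] (p : ℕ) [CharP k p] (α : MulAut (FreeGroup (Fin 2)))
    (hx : α (FreeGroup.of 0) = FreeGroup.of 0)
    (hy : α (FreeGroup.of 1) = FreeGroup.of 1 * FreeGroup.of 0) :
    ∃ (F : Type) (_ : Field F), CharP F p ∧
      ∃ ψ : (FreeGroup (Fin 2) ⋊[zpowersHom (MulAut (FreeGroup (Fin 2))) α]
          Multiplicative ℤ) →* GL (Fin 6) F,
        Function.Injective ψ := by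
  refine ⟨HahnSeries Gam k, inferInstance, ?_, ?_⟩
  · exact charP_of_injective_ringHom (HahnSeries.C_injective (Γ := Gam) (R := k)) p
  · let v := HahnSeries.addVal Gam k
    have ha : Val v (HahnSeries.single (toLex (1, 0) : Gam) (1 : k)) 1 0 := by
      unfold Val
      rw [HahnSeries.addVal_apply, HahnSeries.orderTop_single one_ne_zero]
    have hs : Val v (HahnSeries.single (toLex (0, 1) : Gam) (1 : k)) 0 1 := by
      unfold Val
      rw [HahnSeries.addVal_apply, HahnSeries.orderTop_single one_ne_zero]
    refine embed α hx hy _ (lift_injective ha hs) (uT _ ha.ne) ?_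
    have key : (FreeGroup.lift (gens _ _ ha.ne hs.ne)).comp α.toMonoidHom =
        (MulAut.conj (uT _ ha.ne)).toMonoidHom.comp (FreeGroup.lift (gens _ _ ha.ne hs.ne)) := by
      ext1 i
      fin_cases i
      · simp [hx, gens, rel_TX]
      · simp [hy, gens, rel_TY]
    intro w
    simpa using DFunLike.congr_fun key w

end ParabolicEmb


open scoped MatrixGroups

/-- Let `α` be the automorphism of the free group `F₂` on
`x, y` (here `x = FreeGroup.of 0`, `y = FreeGroup.of 1`) with `α(x) = x` and
`α(y) = yx`. Then for every `p` equal to zero or a prime, `F₂ ⋊_α ℤ` embeds in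
`GL(6,F)` for some field `F` of characteristic `p`. -/
theorem free2_parabolic_semidirect_embeds_in_GL6
    (α : MulAut (FreeGroup (Fin 2)))
    (hx : α (FreeGroup.of 0) = FreeGroup.of 0)
    (hy : α (FreeGroup.of 1) = FreeGroup.of 1 * FreeGroup.of 0)
    (p : ℕ) (hp : p = 0 ∨ p.Prime) :
    ∃ (F : Type) (_ : Field F), CharP F p ∧
      ∃ ψ : (FreeGroup (Fin 2) ⋊[zpowersHom (MulAut (FreeGroup (Fin 2))) α]
          Multiplicative ℤ) →* GL (Fin 6) F,
        Function.Injective ψ := by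
  rcases hp with rfl | hp
  · exact ParabolicEmb.main_field ℚ 0 α hx hy
  · have := Fact.mk hp
    exact ParabolicEmb.main_field (ZMod p) p α hx hy
end

section
/- Let F be a field, d ≥ 1, and let T, A ∈ GL(d,F) be commuting matrices such that T is conjugate in GL(d,F) to TA and also conjugate in GL(d,F) to TA². Then every eigenvalue of A in an algebraic closure of F is a root of unity; equivalently, there exists an integer e ≥ 1 such that every root of the characteristic polynomial of A in the algebraic closure of F satisfies μᵉ = 1. -/
open scoped MatrixGroups

/-- Separate non-torsion elements of an abelian group by homomorphisms to `ℚ`. -/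
lemma aux_torsion {M : Type*} [AddCommGroup M] (m : M) (h : ∀ φ : M →+ ℚ, φ m = 0) :
    ∃ n : ℕ, 1 ≤ n ∧ n • m = 0 := by
  let ι : M →ₗ[ℤ] TensorProduct ℤ ℚ M := TensorProduct.mk ℤ ℚ M 1
  have h0 : ι m = 0 := by
    rw [← Module.forall_dual_apply_eq_zero_iff ℚ]
    intro g
    exact h (g.toAddMonoidHom.comp ι.toAddMonoidHom)
  have : IsLocalizedModule (nonZeroDivisors ℤ) ι :=
    IsLocalization.tensorProduct_isLocalizedModule (nonZeroDivisors ℤ) ℚ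
  obtain ⟨⟨z, hz⟩, hz'⟩ := (IsLocalizedModule.eq_zero_iff (nonZeroDivisors ℤ) ι).1 h0
  have hz0 : z ≠ 0 := nonZeroDivisors.ne_zero hz
  have hz2 : z • m = 0 := hz'
  refine ⟨z.natAbs, Int.natAbs_pos.2 hz0, ?_⟩
  rw [← natCast_zsmul]
  rcases Int.natAbs_eq z with h1 | h1
  · rw [← h1, hz2]
  · have : ((z.natAbs : ℕ) : ℤ) = -z := by omega
    rw [this, neg_smul, hz2, neg_zero]

lemma aux_multiset {K : Type*} [Field K] (s : Multiset (K × K))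
    (h0 : ∀ p ∈ s, p.1 ≠ 0 ∧ p.2 ≠ 0)
    (h1 : s.map (fun p => p.1) = s.map (fun p => p.1 * p.2))
    (h2 : s.map (fun p => p.1) = s.map (fun p => p.1 * p.2 ^ 2)) :
    ∀ p ∈ s, ∃ n : ℕ, 1 ≤ n ∧ p.2 ^ n = 1 := by
  classical
  intro p hp
  obtain ⟨n, hn, hn'⟩ := aux_torsion (Additive.ofMul (Units.mk0 p.2 (h0 p hp).2)) (by
    intro φ
    let ψ : K → ℚ := fun x => if h : x ≠ 0 then φ (Additive.ofMul (Units.mk0 x h)) else 0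
    have hψ : ∀ x y : K, x ≠ 0 → y ≠ 0 → ψ (x * y) = ψ x + ψ y := by
      intro x y hx hy
      simp only [ψ]
      rw [dif_pos hx, dif_pos hy, dif_pos (mul_ne_zero hx hy), ← map_add, ← ofMul_mul]
      congr 2
      ext; simp
    have e1 : (s.map (fun p => ψ p.1 ^ 2)).sum = (s.map (fun p => (ψ p.1 + ψ p.2) ^ 2)).sum := by
      have := congrArg (fun t => (t.map (fun x => ψ x ^ 2)).sum) h1
      simp only [Multiset.map_map, Function.comp_def] at this
      rw [this]
      congr 1
      refine Multiset.map_congr rfl fun q hq => ?_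
      rw [hψ _ _ (h0 q hq).1 (h0 q hq).2]
    have e2 : (s.map (fun p => ψ p.1 ^ 2)).sum
        = (s.map (fun p => (ψ p.1 + (ψ p.2 + ψ p.2)) ^ 2)).sum := by
      have := congrArg (fun t => (t.map (fun x => ψ x ^ 2)).sum) h2
      simp only [Multiset.map_map, Function.comp_def] at this
      rw [this]
      congr 1
      refine Multiset.map_congr rfl fun q hq => ?_
      rw [hψ _ _ (h0 q hq).1 (pow_ne_zero 2 (h0 q hq).2), pow_two q.2,
        hψ _ _ (h0 q hq).2 (h0 q hq).2]
    have e3 : (s.map (fun p => (ψ p.1 + (ψ p.2 + ψ p.2)) ^ 2)).sum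
        + (s.map (fun p => ψ p.1 ^ 2)).sum
        = (s.map (fun p => (ψ p.1 + ψ p.2) ^ 2)).sum + (s.map (fun p => (ψ p.1 + ψ p.2) ^ 2)).sum
          + ((s.map (fun p => ψ p.2 ^ 2)).sum + (s.map (fun p => ψ p.2 ^ 2)).sum) := by
      simp only [← Multiset.sum_map_add]
      congr 1
      refine Multiset.map_congr rfl fun q hq => ?_
      ring
    have e4 : (s.map (fun p => ψ p.2 ^ 2)).sum = 0 := by linarith
    have e5 : ψ p.2 ^ 2 ≤ (s.map (fun p => ψ p.2 ^ 2)).sum := by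
      refine Multiset.single_le_sum ?_ _ (Multiset.mem_map_of_mem _ hp)
      intro x hx
      obtain ⟨q, -, rfl⟩ := Multiset.mem_map.1 hx
      positivity
    have e6 : ψ p.2 = 0 := by
      have : ψ p.2 ^ 2 = 0 := le_antisymm (e5.trans e4.le) (sq_nonneg _)
      exact pow_eq_zero_iff (two_ne_zero) |>.1 this
    simpa [ψ, (h0 p hp).2] using e6)
  refine ⟨n, hn, ?_⟩
  have := congrArg (fun u => ((Additive.toMul u : Kˣ) : K)) hn'
  simpa using this

lemma aux_common {K V : Type*} [Field K] [IsAlgClosed K] [AddCommGroup V] [Module K V]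
    [FiniteDimensional K V] [Nontrivial V] (f g : Module.End K V) (h : Commute f g) :
    ∃ (t a : K) (v : V), v ≠ 0 ∧ f v = t • v ∧ g v = a • v := by
  obtain ⟨t, ht⟩ := Module.End.exists_eigenvalue f
  have hmap : ∀ x ∈ f.eigenspace t, g x ∈ f.eigenspace t := by
    intro x hx
    rw [Module.End.mem_eigenspace_iff] at hx ⊢
    have := congrArg (fun u : Module.End K V => u x) h.eq
    simp only [Module.End.mul_apply] at this
    rw [this, hx, map_smul]
  have : Nontrivial (f.eigenspace t) := Submodule.nontrivial_iff_ne_bot.2 ht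
  obtain ⟨a, ha⟩ := Module.End.exists_eigenvalue (g.restrict hmap)
  obtain ⟨v, hv⟩ := ha.exists_hasEigenvector
  refine ⟨t, a, v, ?_, ?_, ?_⟩
  · simpa using hv.2
  · exact Module.End.mem_eigenspace_iff.1 v.2
  · simpa using congrArg Subtype.val hv.apply_eq_smul

lemma aux_triang {K : Type*} [Field K] [IsAlgClosed K] (n : ℕ) :
    ∀ (V : Type _) [AddCommGroup V] [Module K V] [FiniteDimensional K V]
    (f g : Module.End K V), Commute f g → Module.finrank K V = n →
    ∃ s : Multiset (K × K), ∀ (j k : ℕ) (c : K),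
      LinearMap.det (algebraMap K (Module.End K V) c - f ^ j * g ^ k)
        = (s.map fun p => c - p.1 ^ j * p.2 ^ k).prod := by
  induction n with
  | zero =>
    intro V _ _ _ f g hfg hV
    refine ⟨0, fun j k c => ?_⟩
    have : Subsingleton V := Module.finrank_zero_iff.1 hV
    simp [LinearMap.det_eq_one_of_subsingleton]
  | succ n ih =>
    intro V _ _ _ f g hfg hV
    have : Nontrivial V := Module.nontrivial_of_finrank_pos (R := K) (by omega)
    obtain ⟨t, a, v, hv, hf, hg⟩ := aux_common f g hfg
    let W : Submodule K V := K ∙ v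
    have hsc : ∀ (e : Module.End K V) (r : K), e v = r • v → ∀ x ∈ W, e x = r • x := by
      intro e r her x hx
      obtain ⟨y, rfl⟩ := Submodule.mem_span_singleton.1 hx
      rw [map_smul, her, smul_comm]
    have hle : ∀ (e : Module.End K V) (r : K), e v = r • v → W ≤ W.comap e := by
      intro e r her x hx
      rw [Submodule.mem_comap, hsc e r her x hx]
      exact W.smul_mem _ hx
    have hWf := hle f t hf
    have hWg := hle g a hg
    have hW1 : Module.finrank K W = 1 := finrank_span_singleton hv
    have hQ : Module.finrank K (V ⧸ W) = n := by
      have := W.finrank_quotient_add_finrank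
      omega
    obtain ⟨s, hs⟩ := ih (V ⧸ W) (W.mapQ W f hWf) (W.mapQ W g hWg) (by
      refine LinearMap.ext fun x => ?_
      obtain ⟨x, rfl⟩ := W.mkQ_surjective x
      have := congrArg (fun u : Module.End K V => u x) hfg.eq
      simp only [Module.End.mul_apply] at this
      simp [this]) hQ
    refine ⟨(t, a) ::ₘ s, fun j k c => ?_⟩
    have hpow : ∀ (e : Module.End K V) (r : K), e v = r • v → ∀ m : ℕ, (e ^ m) v = r ^ m • v := by
      intro e r her m
      induction m with
      | zero => simp
      | succ m ihm => rw [pow_succ, Module.End.mul_apply, her, map_smul, ihm, smul_smul, pow_succ']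
    have he : (algebraMap K (Module.End K V) c - f ^ j * g ^ k) v = (c - t ^ j * a ^ k) • v := by
      simp only [LinearMap.sub_apply, Module.End.mul_apply, Module.algebraMap_end_apply,
        hpow g a hg, map_smul, hpow f t hf, smul_smul, sub_smul]
      rw [mul_comm]
    rw [LinearMap.det_eq_det_mul_det W _ (hle _ _ he), Multiset.map_cons, Multiset.prod_cons,
      ← hs j k c]
    congr 1
    · have : LinearMap.restrict (algebraMap K (Module.End K V) c - f ^ j * g ^ k)
          (p := W) (q := W) (fun x hx => hle _ _ he hx)
          = (c - t ^ j * a ^ k) • LinearMap.id := by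
        ext x
        exact hsc _ _ he x x.2
      rw [this, LinearMap.det_smul, hW1]
      simp
    · congr 1
      refine LinearMap.ext fun x => ?_
      obtain ⟨x, rfl⟩ := W.mkQ_surjective x
      have hq : ∀ (e : Module.End K V) (hW : W ≤ W.comap e) (m : ℕ) (y : V),
          ((W.mapQ W e hW) ^ m) (W.mkQ y) = W.mkQ ((e ^ m) y) := by
        intro e hW m
        induction m with
        | zero => intro y; simp
        | succ m ihm =>
          intro y
          rw [pow_succ, pow_succ, Module.End.mul_apply, Module.End.mul_apply, ← ihm]
          rfl
      rw [LinearMap.sub_apply, Module.End.mul_apply, hq, hq]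
      rfl

lemma aux_matrix {K : Type*} [Field K] [IsAlgClosed K] (d : ℕ)
    (T A : Matrix (Fin d) (Fin d) K) (h : Commute T A) :
    ∃ s : Multiset (K × K), ∀ (j k : ℕ),
      (T ^ j * A ^ k).charpoly.roots = s.map fun p => p.1 ^ j * p.2 ^ k := by
  obtain ⟨s, hs⟩ := aux_triang (K := K) d (Fin d → K) (Matrix.toLinAlgEquiv' T)
    (Matrix.toLinAlgEquiv' A) (h.map _) (by simp)
  refine ⟨s, fun j k => ?_⟩
  have : (T ^ j * A ^ k).charpoly
      = ((s.map fun p => p.1 ^ j * p.2 ^ k).map fun x => Polynomial.X - Polynomial.C x).prod := by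
    refine Polynomial.funext fun c => ?_
    rw [Matrix.eval_charpoly, Polynomial.eval_multiset_prod, Multiset.map_map, Multiset.map_map]
    simp only [Function.comp_def, Polynomial.eval_sub, Polynomial.eval_X, Polynomial.eval_C]
    rw [← hs j k c, ← map_pow, ← map_pow, ← map_mul,
      ← AlgEquiv.commutes (Matrix.toLinAlgEquiv' (R := K) (n := Fin d)) c, ← map_sub]
    exact (LinearMap.det_toLin' _).symm
  rw [this, Polynomial.roots_multiset_prod_X_sub_C]

/-- If `T, A ∈ GL(d,F)` commute and `T` is conjugate in
`GL(d,F)` both to `TA` and to `TA²`, then all eigenvalues of `A` in an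
algebraic closure of `F` (i.e. all roots of its characteristic polynomial) are
roots of unity: some `e ≥ 1` has `μᵉ = 1` for every such root `μ`. -/
theorem eigenvalues_roots_of_unity_of_conj_TA_TA2
    (F : Type) [Field F] (d : ℕ) (hd : 1 ≤ d)
    (T A : GL (Fin d) F) (hcomm : Commute T A)
    (hTA : ∃ X : GL (Fin d) F, X * T * X⁻¹ = T * A)
    (hTA2 : ∃ Y : GL (Fin d) F, Y * T * Y⁻¹ = T * A ^ 2) :
    ∃ e : ℕ, 1 ≤ e ∧ ∀ μ : AlgebraicClosure F,
      Polynomial.aeval μ (Matrix.charpoly (A : Matrix (Fin d) (Fin d) F)) = 0 →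
      μ ^ e = 1 := by
  classical
  let K := AlgebraicClosure F
  let ι : F →+* K := algebraMap F K
  have conj : ∀ B : GL (Fin d) F, (∃ X : GL (Fin d) F, X * T * X⁻¹ = B) →
      ((T : Matrix (Fin d) (Fin d) F).map ι).charpoly
        = ((B : Matrix (Fin d) (Fin d) F).map ι).charpoly := by
    rintro B ⟨X, rfl⟩
    rw [Matrix.charpoly_map, Matrix.charpoly_map, Units.val_mul, Units.val_mul,
      Matrix.coe_units_inv, Matrix.charpoly_units_conj]
  have c1 := conj _ hTA
  have c2 := conj _ hTA2
  obtain ⟨s, hs⟩ := aux_matrix d ((T : Matrix (Fin d) (Fin d) F).map ι)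
    ((A : Matrix (Fin d) (Fin d) F).map ι)
    (by
      have := congrArg (fun u : GL (Fin d) F => (u : Matrix (Fin d) (Fin d) F).map ι) hcomm.eq
      simpa [Commute, SemiconjBy, Matrix.map_mul] using this)
  have unit0 : ∀ B : GL (Fin d) F,
      (0 : K) ∉ ((B : Matrix (Fin d) (Fin d) F).map ι).charpoly.roots := by
    intro B h
    have h1 := (Polynomial.mem_roots'.1 h).2
    rw [Polynomial.IsRoot.def, Matrix.eval_charpoly] at h1
    have hB : ((B : Matrix (Fin d) (Fin d) F)).det ≠ 0 := B.det.ne_zero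
    have h2 : ((B : Matrix (Fin d) (Fin d) F).map ι).det = 0 := by
      simpa [Matrix.det_neg] using h1
    have h3 := RingHom.map_det ι (B : Matrix (Fin d) (Fin d) F)
    rw [RingHom.mapMatrix_apply, h2] at h3
    exact hB ((map_eq_zero ι).1 h3)
  have hT := hs 1 0
  have hA := hs 0 1
  have hT1 := hs 1 1
  have hT2 := hs 1 2
  simp only [pow_one, pow_zero, mul_one, one_mul] at hT hA hT1 hT2
  rw [Units.val_mul, Matrix.map_mul] at c1 c2
  rw [Units.val_pow_eq_pow_val, Matrix.map_pow] at c2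
  rw [← c1, hT] at hT1
  rw [← c2, hT] at hT2
  have key := aux_multiset s (fun p hp => ⟨fun h => unit0 T (by
      rw [hT, ← h]; exact Multiset.mem_map_of_mem _ hp), fun h => unit0 A (by
      rw [hA, ← h]; exact Multiset.mem_map_of_mem _ hp)⟩) hT1 hT2
  have key2 : ∀ x ∈ (s.map fun p => p.2).toFinset, ∃ n : ℕ, 1 ≤ n ∧ x ^ n = 1 := by
    intro x hx
    obtain ⟨p, hp, rfl⟩ := Multiset.mem_map.1 (Multiset.mem_toFinset.1 hx)
    exact key p hp
  choose! N hN1 hN2 using key2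
  refine ⟨∏ x ∈ (s.map fun p => p.2).toFinset, N x,
    Nat.succ_le_of_lt (Finset.prod_pos fun x hx => Nat.lt_of_succ_le (hN1 x hx)), fun μ hμ => ?_⟩
  have hm : μ ∈ (s.map fun p => p.2).toFinset := by
    rw [Multiset.mem_toFinset, ← hA, Polynomial.mem_roots (Matrix.charpoly_monic _).ne_zero,
      Matrix.charpoly_map, Polynomial.IsRoot.def, Polynomial.eval_map]
    exact hμ
  obtain ⟨m, hm'⟩ := Finset.dvd_prod_of_mem N hm
  rw [hm', pow_mul, hN2 μ hm, one_pow]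
end

section
/- Let d ≥ 1, let σ be a permutation of ℤ/dℤ, and let r : ℤ/dℤ → ℝ satisfy 2·r(i+1) = r(i) + r(σ(i)) for every i ∈ ℤ/dℤ. Then r is a constant function. -/
/-- If `d ≥ 1`, `σ` is a permutation of `ℤ/dℤ` and
`r : ℤ/dℤ → ℝ` satisfies `2·r(i+1) = r(i) + r(σ(i))` for all `i`, then `r` is
constant. -/
theorem cyclic_mean_relation_constant
    (d : ℕ) (hd : 1 ≤ d) (σ : Equiv.Perm (ZMod d)) (r : ZMod d → ℝ)
    (h : ∀ i : ZMod d, 2 * r (i + 1) = r i + r (σ i)) :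
    ∀ i j : ZMod d, r i = r j := by
  haveI : NeZero d := ⟨by omega⟩
  have h1 : ∑ i, r (i + 1) ^ 2 = ∑ i, r i ^ 2 :=
    Equiv.sum_comp (Equiv.addRight (1 : ZMod d)) (fun i => r i ^ 2)
  have h2 : ∑ i, r (σ i) ^ 2 = ∑ i, r i ^ 2 :=
    Equiv.sum_comp σ (fun i => r i ^ 2)
  have h3 : ∑ i, (r i - r (σ i)) ^ 2 = 0 := by
    have h4 : ∀ i, (r i - r (σ i)) ^ 2
        = 2 * r i ^ 2 + 2 * r (σ i) ^ 2 - 4 * r (i + 1) ^ 2 := by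
      intro i
      have e : r (σ i) = 2 * r (i + 1) - r i := by linarith [h i]
      rw [e]
      ring
    simp only [h4, Finset.sum_sub_distrib, Finset.sum_add_distrib, ← Finset.mul_sum, h1, h2]
    ring
  have h5 : ∀ i, r (i + 1) = r i := by
    intro i
    have h6 := (Finset.sum_eq_zero_iff_of_nonneg (fun i _ => sq_nonneg (r i - r (σ i)))).1 h3 i
      (Finset.mem_univ i)
    have h7 := pow_eq_zero_iff (two_ne_zero) |>.1 h6
    linarith [h i]
  have h8 : ∀ n : ℕ, r (n : ZMod d) = r 0 := by
    intro n
    induction n with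
    | zero => simp
    | succ k ih => rw [Nat.cast_succ, h5, ih]
  have h9 : ∀ i, r i = r 0 := by
    intro i
    have h10 := h8 i.val
    rwa [ZMod.natCast_zmod_val] at h10
  intro i j
  rw [h9 i, h9 j]
end

section
/- Let G be a group containing commuting elements T and A such that A has infinite order and such that T is conjugate in G to TA and also conjugate in G to TA². Then for every field F of positive characteristic and every d ≥ 1, there is no injective group homomorphism from G into GL(d,F). In particular, the Gersten group — the semidirect product F₃ ⋊_α ℤ, where F₃ is the free group on a, b, c and α(a) = a, α(b) = ba, α(c) = ca² — admits no injective group homomorphism into GL(d,F) for any d ≥ 1 and any field F of positive characteristic. -/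
open scoped MatrixGroups


namespace GerstenAux

open Module Module.End

/-- A homomorphism to the rationals detecting an element of infinite order. -/
lemma exists_hom {M : Type*} [AddCommGroup M] (m : M) (hm : ∀ n : ℕ, 0 < n → n • m ≠ 0) :
    ∃ φ : M →+ ℚ, φ m ≠ 0 := by
  have hinj : Function.Injective (zmultiplesHom M m) := by
    rw [injective_iff_map_eq_zero]
    intro n hn
    rw [zmultiplesHom_apply] at hn
    by_contra hne
    refine hm n.natAbs (Int.natAbs_pos.mpr hne) ?_
    rcases Int.natAbs_eq n with h | h
    · rw [h, natCast_zsmul] at hn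
      exact hn
    · rw [h, neg_smul, natCast_zsmul, neg_eq_zero] at hn
      exact hn
  obtain ⟨φ, hφ⟩ := (Module.Baer.of_divisible ℚ).extension_property_addMonoidHom
    (zmultiplesHom M m) hinj (Int.castAddHom ℚ)
  refine ⟨φ, ?_⟩
  have := DFunLike.congr_fun hφ (1 : ℤ)
  simp at this
  rw [this]
  exact one_ne_zero

variable {K V : Type*} [Field K] [AddCommGroup V] [Module K V]

lemma mem_mul {T A : End K V} (h : Commute T A) {l m : K} {v : V}
    (hT : v ∈ T.maxGenEigenspace l) (hA : v ∈ A.maxGenEigenspace m) :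
    v ∈ (T * A).maxGenEigenspace (l * m) := by
  have hc : Commute (T - l • (1 : End K V)) A :=
    h.sub_left ((Commute.one_left A).smul_left l)
  have hc2 : Commute (T - l • (1 : End K V)) (A - m • (1 : End K V)) :=
    hc.sub_right ((Commute.one_right _).smul_right m)
  have h1 : v ∈ ((T - l • (1 : End K V)) * A).maxGenEigenspace 0 := by
    rw [mem_maxGenEigenspace] at hT ⊢
    obtain ⟨k, hk⟩ := hT
    refine ⟨k, ?_⟩
    rw [zero_smul, sub_zero, hc.eq, hc.symm.mul_pow, Module.End.mul_apply, hk, map_zero]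
  have h2 : v ∈ (l • (A - m • (1 : End K V))).maxGenEigenspace 0 := by
    rw [mem_maxGenEigenspace] at hA ⊢
    obtain ⟨k, hk⟩ := hA
    refine ⟨k, ?_⟩
    rw [zero_smul, sub_zero, smul_pow, LinearMap.smul_apply, hk, smul_zero]
  have hc3 : Commute ((T - l • (1 : End K V)) * A) (l • (A - m • (1 : End K V))) := by
    refine Commute.smul_right (Commute.mul_left hc2 ?_) l
    exact (Commute.refl A).sub_right ((Commute.one_right _).smul_right m)
  have h3 := genEigenspace_inf_le_add _ _ 0 0 ⊤ ⊤ hc3 ⟨h1, h2⟩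
  have e : (T - l • (1 : End K V)) * A + l • (A - m • (1 : End K V))
      = T * A - (l * m) • (1 : End K V) := by
    rw [sub_mul, smul_mul_assoc, one_mul, smul_sub, smul_smul]
    abel
  rw [e] at h3
  have h4 : v ∈ (T * A - (l * m) • (1 : End K V)).maxGenEigenspace 0 := by
    simpa using h3
  rw [mem_maxGenEigenspace] at h4 ⊢
  simpa using h4

lemma mem_pow {A : End K V} {m : K} {v : V} (hA : v ∈ A.maxGenEigenspace m) (n : ℕ) :
    v ∈ (A ^ n).maxGenEigenspace (m ^ n) := by
  induction n with
  | zero =>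
    rw [mem_maxGenEigenspace]
    exact ⟨1, by simp⟩
  | succ n ih =>
    rw [pow_succ, pow_succ]
    exact mem_mul ((Commute.refl A).pow_left n) ih hA

lemma mem_conj {M N g g' : End K V} (hg : g' * g = 1) (h : g * M * g' = N) {c : K} {v : V}
    (hv : v ∈ M.maxGenEigenspace c) : g v ∈ N.maxGenEigenspace c := by
  rw [mem_maxGenEigenspace] at hv ⊢
  obtain ⟨k, hk⟩ := hv
  refine ⟨k, ?_⟩
  have hs : SemiconjBy g (M - c • (1 : End K V)) (N - c • (1 : End K V)) := by
    unfold SemiconjBy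
    rw [← h, mul_sub, sub_mul, mul_assoc (g * M), hg]
    simp
  have h2 := (hs.pow_right k).eq
  have := LinearMap.congr_fun h2 v
  rw [Module.End.mul_apply, Module.End.mul_apply, hk, map_zero] at this
  exact this.symm

variable {ι : Type*} [Fintype ι]

lemma coord_zero {M : End K V} (b : Basis ι K V) (ν : ι → K)
    (hb : ∀ i, b i ∈ M.maxGenEigenspace (ν i)) {c : K} {v : V} (hv : v ∈ M.maxGenEigenspace c)
    (i : ι) (hi : ν i ≠ c) : b.repr v i = 0 := by
  classical
  have hsum := b.sum_repr v
  rw [← Finset.sum_filter_add_sum_filter_not Finset.univ (fun i => ν i = c)] at hsum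
  set x := ∑ i with ν i = c, b.repr v i • b i with hx
  set y := ∑ i with ¬ ν i = c, b.repr v i • b i with hy
  have hx1 : x ∈ M.maxGenEigenspace c := by
    refine Submodule.sum_mem _ fun j hj => Submodule.smul_mem _ _ ?_
    rw [← (Finset.mem_filter.mp hj).2]
    exact hb j
  have hy1 : y ∈ M.maxGenEigenspace c := by
    have : y = v - x := by rw [← hsum]; abel
    rw [this]
    exact Submodule.sub_mem _ hv hx1
  have hy2 : y ∈ ⨆ (d : K) (_ : d ≠ c), M.maxGenEigenspace d := by
    refine Submodule.sum_mem _ fun j hj => Submodule.smul_mem _ _ ?_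
    exact Submodule.mem_iSup_of_mem (ν j)
      (Submodule.mem_iSup_of_mem (Finset.mem_filter.mp hj).2 (hb j))
  have hy0 : y = 0 := (Submodule.disjoint_def.mp (independent_maxGenEigenspace M c)) y hy1 hy2
  have hli := linearIndependent_iff'.mp b.linearIndependent
  exact hli _ _ hy0 i (by simp [hi])

/-- Two bases adapted to the generalized eigenspaces of `M` give the same eigenvalues. -/
lemma exists_perm [DecidableEq ι] {M : End K V} (b b' : Basis ι K V) (ν ν' : ι → K)
    (hb : ∀ i, b i ∈ M.maxGenEigenspace (ν i)) (hb' : ∀ i, b' i ∈ M.maxGenEigenspace (ν' i)) :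
    ∃ σ : Equiv.Perm ι, ∀ i, ν (σ i) = ν' i := by
  have hdet : (b.toMatrix b').det ≠ 0 := by
    have h := b.toMatrix_mul_toMatrix_flip b'
    intro h0
    have h2 := congrArg Matrix.det h
    rw [Matrix.det_mul, h0, zero_mul, Matrix.det_one] at h2
    exact zero_ne_one h2
  rw [Matrix.det_apply] at hdet
  obtain ⟨σ, -, hσ⟩ := Finset.exists_ne_zero_of_sum_ne_zero hdet
  refine ⟨σ, fun i => ?_⟩
  by_contra hne
  apply hσ
  rw [Finset.prod_eq_zero (Finset.mem_univ i), smul_zero]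
  rw [Basis.toMatrix_apply]
  exact coord_zero b ν hb (hb' i) _ hne

lemma ne_zero_of_mem {M M' : End K V} (h : M' * M = 1) {c : K} {v : V} (hv : v ≠ 0)
    (hm : v ∈ M.maxGenEigenspace c) : c ≠ 0 := by
  rintro rfl
  rw [mem_maxGenEigenspace] at hm
  obtain ⟨k, hk⟩ := hm
  rw [zero_smul, sub_zero] at hk
  have h1 : M' ^ k * M ^ k = 1 := pow_mul_pow_eq_one k h
  apply hv
  have := LinearMap.congr_fun h1 v
  rw [Module.End.mul_apply, hk, map_zero] at this
  exact this.symm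

lemma exists_joint [IsAlgClosed K] [FiniteDimensional K V] {T A : End K V} (h : Commute T A) :
    ∃ (s : Set V) (b : Basis s K V) (l m : s → K),
      ∀ i, b i ∈ T.maxGenEigenspace (l i) ∧ b i ∈ A.maxGenEigenspace (m i) := by
  have htop := iSup_iInf_maxGenEigenspace_eq_top_of_iSup_maxGenEigenspace_eq_top_of_commute
    (fun i : Bool => if i then T else A)
    (by
      intro i j hij
      cases i <;> cases j <;> simp_all [h.symm])
    (fun i => iSup_maxGenEigenspace_eq_top _)
  have hs : ⊤ ≤ Submodule.span K
      {v : V | ∃ l m : K, v ∈ T.maxGenEigenspace l ∧ v ∈ A.maxGenEigenspace m} := by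
    rw [← htop]
    refine iSup_le fun χ => fun v hv => Submodule.subset_span ?_
    rw [Submodule.mem_iInf] at hv
    exact ⟨χ true, χ false, by simpa using hv true, by simpa using hv false⟩
  have hb := fun i => Basis.ofSpan_subset hs (Set.mem_range_self i)
  choose l m hlm using hb
  exact ⟨_, Basis.ofSpan hs, l, m, hlm⟩

/-- Every eigenvalue of `A` is a root of unity. -/
lemma tors {s : Type*} [Fintype s] (l m : s → K) (hl0 : ∀ i, l i ≠ 0) (hm0 : ∀ i, m i ≠ 0)
    (σ τ : Equiv.Perm s) (hσ : ∀ i, l (σ i) = l i * m i) (hτ : ∀ i, l (τ i) = l i * m i ^ 2) :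
    ∀ i, ∃ n : ℕ, 0 < n ∧ m i ^ n = 1 := by
  intro i
  by_contra! hcon
  let L : s → Additive Kˣ := fun j => Additive.ofMul (Units.mk0 (l j) (hl0 j))
  let N : s → Additive Kˣ := fun j => Additive.ofMul (Units.mk0 (m j) (hm0 j))
  obtain ⟨φ, hφ⟩ := exists_hom (N i) (by
    intro n hn h0
    apply hcon n hn
    have h3 : (Units.mk0 (m i) (hm0 i)) ^ n = 1 := h0
    simpa using congrArg Units.val h3)
  have e1 : ∀ j, φ (L (σ j)) = φ (L j) + φ (N j) := by
    intro j
    rw [← map_add]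
    congr 1
    apply Additive.toMul.injective
    apply Units.ext
    exact hσ j
  have e2 : ∀ j, φ (L (τ j)) = φ (L j) + 2 * φ (N j) := by
    intro j
    have : L (τ j) = L j + 2 • N j := by
      apply Additive.toMul.injective
      apply Units.ext
      exact hτ j
    rw [this, map_add, map_nsmul]
    simp
  have s1 : ∑ j, (φ (L j) + φ (N j)) ^ 2 = ∑ j, φ (L j) ^ 2 := by
    rw [← Equiv.sum_comp σ (fun j => φ (L j) ^ 2)]
    simp only [e1]
  have s2 : ∑ j, (φ (L j) + 2 * φ (N j)) ^ 2 = ∑ j, φ (L j) ^ 2 := by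
    rw [← Equiv.sum_comp τ (fun j => φ (L j) ^ 2)]
    simp only [e2]
  have s3 : ∑ j, 2 * φ (N j) ^ 2 = 0 := by
    have : ∑ j, 2 * φ (N j) ^ 2 = ∑ j, (φ (L j) + 2 * φ (N j)) ^ 2
        - 2 * ∑ j, (φ (L j) + φ (N j)) ^ 2 + ∑ j, φ (L j) ^ 2 := by
      rw [Finset.mul_sum, ← Finset.sum_sub_distrib, ← Finset.sum_add_distrib]
      exact Finset.sum_congr rfl fun j _ => by ring
    rw [this, s1, s2]
    ring
  rw [Finset.sum_eq_zero_iff_of_nonneg (fun j _ => by positivity)] at s3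
  have := s3 i (Finset.mem_univ i)
  apply hφ
  simpa using this

lemma unip {s : Type*} [Fintype s] (p : ℕ) [Fact p.Prime] [CharP K p]
    (A : (End K V)ˣ) (b : Basis s K V) (m : s → K)
    (hlm : ∀ i, b i ∈ (A : End K V).maxGenEigenspace (m i))
    (htors : ∀ i, ∃ n : ℕ, 0 < n ∧ m i ^ n = 1) : ∃ n : ℕ, 0 < n ∧ A ^ n = 1 := by
  choose n hn hmn using htors
  have hP : ∀ i, m i ^ (∏ j, n j) = 1 := by
    intro i
    obtain ⟨q, hq⟩ := Finset.dvd_prod_of_mem n (Finset.mem_univ i)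
    rw [hq, pow_mul, hmn, one_pow]
  have hu : ∀ i, ∃ k : ℕ, (((A : End K V) ^ (∏ j, n j)) - 1) ^ k = 0 ∨
      ((((A : End K V) ^ (∏ j, n j)) - 1) ^ k) (b i) = 0 := by
    intro i
    have := mem_pow (hlm i) (∏ j, n j)
    rw [hP, mem_maxGenEigenspace] at this
    obtain ⟨k, hk⟩ := this
    exact ⟨k, Or.inr (by simpa using hk)⟩
  choose k hk using hu
  let q := ∑ i, k i
  have hq : q ≤ p ^ q := (Nat.lt_pow_self (Fact.out : p.Prime).one_lt).le
  have hzero : (((A : End K V) ^ (∏ j, n j)) - 1) ^ (p ^ q) = 0 := by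
    apply b.ext
    intro i
    have hki : k i ≤ p ^ q :=
      (Finset.single_le_sum (fun j _ => Nat.zero_le (k j)) (Finset.mem_univ i)).trans hq
    rw [← Nat.sub_add_cancel hki, pow_add, Module.End.mul_apply]
    rcases hk i with h0 | h0 <;> rw [h0] <;> simp
  have hnt : Nontrivial (End K V) ∨ Subsingleton (End K V) := (subsingleton_or_nontrivial _).symm
  rcases hnt with hnt | hnt
  · have : CharP (End K V) p := charP_of_injective_algebraMap (algebraMap K (End K V)).injective p
    rw [sub_pow_char_pow_of_commute _ _ (Commute.one_right _), one_pow, sub_eq_zero, ← pow_mul]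
      at hzero
    refine ⟨(∏ j, n j) * p ^ q, ?_, Units.ext (by simpa using hzero)⟩
    exact Nat.mul_pos (Finset.prod_pos fun j _ => hn j) (pow_pos (Fact.out : p.Prime).pos _)
  · exact ⟨1, one_pos, Units.ext (Subsingleton.elim _ _)⟩

theorem core [IsAlgClosed K] [FiniteDimensional K V] (p : ℕ) [Fact p.Prime] [CharP K p]
    (T A g h : (End K V)ˣ) (hTA : Commute T A) (hg : g * T * g⁻¹ = T * A)
    (hh : h * T * h⁻¹ = T * A ^ 2) : ∃ n : ℕ, 0 < n ∧ A ^ n = 1 := by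
  classical
  have hc : Commute (T : End K V) (A : End K V) := by
    exact congrArg Units.val hTA.eq
  obtain ⟨s, b, l, m, hlm⟩ := exists_joint hc
  have : Fintype s := FiniteDimensional.fintypeBasisIndex b
  have hl0 : ∀ i, l i ≠ 0 := fun i => ne_zero_of_mem (Units.inv_mul T) (b.ne_zero i) (hlm i).1
  have hm0 : ∀ i, m i ≠ 0 := fun i => ne_zero_of_mem (Units.inv_mul A) (b.ne_zero i) (hlm i).2
  obtain ⟨eg, heg⟩ : ∃ e : V ≃ₗ[K] V, ∀ v, e v = (g : End K V) v :=
    ⟨LinearMap.GeneralLinearGroup.generalLinearEquiv K V g, fun _ => rfl⟩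
  obtain ⟨eh, heh⟩ : ∃ e : V ≃ₗ[K] V, ∀ v, e v = (h : End K V) v :=
    ⟨LinearMap.GeneralLinearGroup.generalLinearEquiv K V h, fun _ => rfl⟩
  have h1 : ∀ i, b i ∈ ((T : End K V) * A).maxGenEigenspace (l i * m i) := fun i =>
    mem_mul hc (hlm i).1 (hlm i).2
  have h2 : ∀ i, b i ∈ ((T : End K V) * A ^ 2).maxGenEigenspace (l i * m i ^ 2) := fun i =>
    mem_mul (hc.pow_right 2) (hlm i).1 (mem_pow (hlm i).2 2)
  have h1' : ∀ i, b.map eg i ∈ ((T : End K V) * A).maxGenEigenspace (l i) := fun i => by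
    rw [Basis.map_apply, heg]
    exact mem_conj (Units.inv_mul g) (congrArg Units.val hg) (hlm i).1
  have h2' : ∀ i, b.map eh i ∈ ((T : End K V) * A ^ 2).maxGenEigenspace (l i) := fun i => by
    rw [Basis.map_apply, heh]
    exact mem_conj (Units.inv_mul h) (congrArg Units.val hh) (hlm i).1
  obtain ⟨σ, hσ⟩ := exists_perm (b.map eg) b _ _ h1' h1
  obtain ⟨τ, hτ⟩ := exists_perm (b.map eh) b _ _ h2' h2
  exact unip p A b m (fun i => (hlm i).2) (tors l m hl0 hm0 σ τ hσ hτ)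

theorem part1 (G : Type) [Group G] (T A : G) (hTA : Commute T A)
    (hA : ∀ n : ℤ, n ≠ 0 → A ^ n ≠ 1)
    (hg : ∃ g : G, g * T * g⁻¹ = T * A)
    (hh : ∃ h : G, h * T * h⁻¹ = T * A ^ 2)
    (F : Type) [Field F] (p : ℕ) (hp : p ≠ 0) (hF : CharP F p) (d : ℕ) :
    ¬ ∃ ρ : G →* GL (Fin d) F, Function.Injective ρ := by
  rintro ⟨ρ, hρ⟩
  obtain ⟨g, hg⟩ := hg
  obtain ⟨h, hh⟩ := hh
  have hprime : Fact p.Prime := ⟨(CharP.char_is_prime_or_zero F p).resolve_right hp⟩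
  let K := AlgebraicClosure F
  have : CharP K p := charP_of_injective_algebraMap (algebraMap F K).injective p
  let e : Matrix (Fin d) (Fin d) F →* End K (Fin d → K) :=
    (Matrix.toLinAlgEquiv' (R := K) (n := Fin d)).toAlgHom.toRingHom.toMonoidHom.comp
      ((algebraMap F K).mapMatrix (m := Fin d)).toMonoidHom
  have he : Function.Injective e := by
    refine (Matrix.toLinAlgEquiv' (R := K) (n := Fin d)).injective.comp ?_
    exact Matrix.map_injective (algebraMap F K).injective
  let r : G →* (End K (Fin d → K))ˣ := (Units.map e).comp ρ
  have hr : Function.Injective r := (Units.map_injective he).comp hρ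
  obtain ⟨n, hn, h1⟩ := core p (r T) (r A) (r g) (r h) (hTA.map r)
    (by rw [← map_inv, ← map_mul, ← map_mul, hg, map_mul])
    (by rw [← map_inv, ← map_mul, ← map_mul, hh, map_mul, map_pow])
  refine hA n (by exact_mod_cast hn.ne') (hr ?_)
  rw [zpow_natCast, map_pow, h1, map_one]

end GerstenAux

/-- If a group `G` has commuting elements `T, A` with `A` of
infinite order and `T` conjugate both to `TA` and to `TA²`, then `G` embeds in
`GL(d,F)` for no `d ≥ 1` and no field `F` of positive characteristic. In
particular the Gersten group `F₃ ⋊_α ℤ` (where `α(a) = a`, `α(b) = ba`,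
`α(c) = ca²`, with `a = of 0`, `b = of 1`, `c = of 2`) is not linear over any
field of positive characteristic. -/
theorem not_linear_pos_char_of_conj_TA_TA2_and_gersten :
    (∀ (G : Type) [Group G] (T A : G), Commute T A →
      (∀ n : ℤ, n ≠ 0 → A ^ n ≠ 1) →
      (∃ g : G, g * T * g⁻¹ = T * A) →
      (∃ h : G, h * T * h⁻¹ = T * A ^ 2) →
      ∀ (F : Type) [Field F] (p : ℕ), p ≠ 0 → CharP F p →
        ∀ d : ℕ, 1 ≤ d →
          ¬ ∃ ρ : G →* GL (Fin d) F, Function.Injective ρ) ∧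
    (∀ α : MulAut (FreeGroup (Fin 3)),
      α (FreeGroup.of 0) = FreeGroup.of 0 →
      α (FreeGroup.of 1) = FreeGroup.of 1 * FreeGroup.of 0 →
      α (FreeGroup.of 2) = FreeGroup.of 2 * FreeGroup.of 0 ^ 2 →
      ∀ (F : Type) [Field F] (p : ℕ), p ≠ 0 → CharP F p →
        ∀ d : ℕ, 1 ≤ d →
          ¬ ∃ ρ : (FreeGroup (Fin 3) ⋊[zpowersHom (MulAut (FreeGroup (Fin 3))) α]
              Multiplicative ℤ) →* GL (Fin d) F,
            Function.Injective ρ) := by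
  refine ⟨fun G _ T A hTA hA hg hh F _ p hp hF d _ =>
    GerstenAux.part1 G T A hTA hA hg hh F p hp hF d, ?_⟩
  intro α ha hb hc F _ p hp hF d _
  have key : ∀ x : FreeGroup (Fin 3),
      (SemidirectProduct.inr (Multiplicative.ofAdd 1) :
        FreeGroup (Fin 3) ⋊[zpowersHom (MulAut (FreeGroup (Fin 3))) α] Multiplicative ℤ)
        * SemidirectProduct.inl x
      = SemidirectProduct.inl (α x) * SemidirectProduct.inr (Multiplicative.ofAdd 1) := by
    intro x
    ext <;> simp
  have conj : ∀ x y : FreeGroup (Fin 3), α x = x * y → Commute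
      (SemidirectProduct.inr (Multiplicative.ofAdd 1) :
        FreeGroup (Fin 3) ⋊[zpowersHom (MulAut (FreeGroup (Fin 3))) α] Multiplicative ℤ)
        (SemidirectProduct.inl y) →
      (SemidirectProduct.inl x)⁻¹ * (SemidirectProduct.inr (Multiplicative.ofAdd 1) :
        FreeGroup (Fin 3) ⋊[zpowersHom (MulAut (FreeGroup (Fin 3))) α] Multiplicative ℤ)
        * ((SemidirectProduct.inl x)⁻¹)⁻¹
      = SemidirectProduct.inr (Multiplicative.ofAdd 1) * SemidirectProduct.inl y := by
    intro x y hxy hcomm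
    rw [inv_inv, mul_assoc, key, hxy, map_mul, hcomm.eq, mul_assoc, inv_mul_cancel_left]
  have hcomm : Commute
      (SemidirectProduct.inr (Multiplicative.ofAdd 1) :
        FreeGroup (Fin 3) ⋊[zpowersHom (MulAut (FreeGroup (Fin 3))) α] Multiplicative ℤ)
      (SemidirectProduct.inl (FreeGroup.of 0)) := by
    have := key (FreeGroup.of 0)
    rw [ha] at this
    exact this
  refine GerstenAux.part1 _ (SemidirectProduct.inr (Multiplicative.ofAdd 1))
    (SemidirectProduct.inl (FreeGroup.of 0)) hcomm ?_ ⟨_, conj _ _ hb hcomm⟩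
    ⟨(SemidirectProduct.inl (FreeGroup.of 2))⁻¹, ?_⟩ F p hp hF d
  · intro n hn h1
    rw [← map_zpow] at h1
    have h2 : (FreeGroup.of (0 : Fin 3)) ^ n = 1 :=
      SemidirectProduct.inl_injective (h1.trans (map_one _).symm)
    have h3 := congrArg (FreeGroup.lift (fun _ : Fin 3 => Multiplicative.ofAdd (1 : ℤ))) h2
    rw [map_zpow, FreeGroup.lift_apply_of, MonoidHom.map_one, ← ofAdd_zsmul] at h3
    apply hn
    simpa using congrArg Multiplicative.toAdd h3
  · rw [← map_pow]
    refine conj _ _ hc ?_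
    rw [map_pow]
    exact hcomm.pow_right 2
end

section
/- There is no injective group homomorphism from the Gersten group into GL(4,ℂ). Consequently, for every field F and every d ≤ 4, there is no injective group homomorphism from the Gersten group into GL(d,F), i.e. the Gersten group has no faithful linear representation of dimension 4 or less over any field. -/
set_option linter.unusedSectionVars false
set_option linter.unusedVariables false

namespace GerstenAux
open Module

section Flag
variable {F V : Type*} [Field F] [AddCommGroup V] [Module F V] [FiniteDimensional F V]

/-- A nilpotent map preserving `U₁ ≤ U₂` of codimension at most one maps `U₂` into `U₁`. -/
lemma nil_step (Z : End F V) (hZ : IsNilpotent Z) (U₁ U₂ : Submodule F V) (h12 : U₁ ≤ U₂)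
    (h1 : U₁.map Z ≤ U₁) (h2 : U₂.map Z ≤ U₂) (hd : finrank F U₂ ≤ finrank F U₁ + 1) :
    U₂.map Z ≤ U₁ := by
  by_cases h : U₁ ⊔ U₂.map Z = U₂
  · have key : ∀ k : ℕ, U₂ ≤ U₁ ⊔ U₂.map (Z ^ k) := by
      intro k
      induction k with
      | zero => simp [Module.End.one_eq_id]
      | succ k ih =>
        have : U₂.map Z ≤ U₁ ⊔ U₂.map (Z ^ (k + 1)) := by
          calc U₂.map Z ≤ (U₁ ⊔ U₂.map (Z ^ k)).map Z := Submodule.map_mono ih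
            _ = U₁.map Z ⊔ (U₂.map (Z ^ k)).map Z := Submodule.map_sup _ _ _
            _ ≤ U₁ ⊔ U₂.map (Z ^ (k + 1)) := by
              rw [← Submodule.map_comp, pow_succ']
              exact sup_le_sup h1 le_rfl
        calc U₂ = U₁ ⊔ U₂.map Z := h.symm
          _ ≤ _ := sup_le le_sup_left this
    obtain ⟨k, hk⟩ := hZ
    have := key k
    rw [hk, Submodule.map_zero, sup_bot_eq] at this
    exact h2.trans this
  · have hlt : U₁ ⊔ U₂.map Z < U₂ := lt_of_le_of_ne (sup_le h12 h2) h
    have h3 := Submodule.finrank_lt_finrank_of_lt hlt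
    have h4 : U₁ = U₁ ⊔ U₂.map Z :=
      Submodule.eq_of_le_of_finrank_le le_sup_left (by omega)
    rw [h4]
    exact le_sup_right

lemma range_pow_strict (X : End F V) (hX : IsNilpotent X) (k : ℕ) (h : X ^ k ≠ 0) :
    finrank F (LinearMap.range (X ^ (k + 1))) < finrank F (LinearMap.range (X ^ k)) := by
  apply Submodule.finrank_lt_finrank_of_lt
  have hle : LinearMap.range (X ^ (k + 1)) ≤ LinearMap.range (X ^ k) := by
    rw [pow_succ]; exact LinearMap.range_comp_le_range _ _
  refine lt_of_le_of_ne hle fun he => h ?_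
  have key : ∀ j, LinearMap.range (X ^ (k + j)) = LinearMap.range (X ^ k) := by
    intro j
    induction j with
    | zero => rfl
    | succ j ih =>
      rw [← add_assoc, pow_succ', Module.End.mul_eq_comp, LinearMap.range_comp, ih,
        ← LinearMap.range_comp, ← Module.End.mul_eq_comp, ← pow_succ', he]
  obtain ⟨m, hm⟩ := hX
  have := key m
  rw [pow_add, hm, mul_zero, LinearMap.range_zero] at this
  exact LinearMap.range_eq_bot.mp this.symm

lemma map_ker_le_of_commute {X Z : End F V} (h : Commute X Z) :
    (LinearMap.ker X).map Z ≤ LinearMap.ker X := by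
  rintro _ ⟨v, hv, rfl⟩
  have := LinearMap.congr_fun h.eq v
  simp only [Module.End.mul_apply] at this
  simp only [SetLike.mem_coe, LinearMap.mem_ker] at hv ⊢
  rw [this, hv, map_zero]

lemma map_range_le_of_commute {X Z : End F V} (h : Commute X Z) :
    (LinearMap.range X).map Z ≤ LinearMap.range X := by
  rintro _ ⟨_, ⟨v, rfl⟩, rfl⟩
  have := LinearMap.congr_fun h.eq v
  simp only [Module.End.mul_apply] at this
  exact ⟨Z v, this⟩

lemma conj_pow {X X' B : End F V} (h : X * B = B * X') (k : ℕ) : X ^ k * B = B * X' ^ k := by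
  induction k with
  | zero => simp
  | succ k ih => rw [pow_succ, mul_assoc, h, ← mul_assoc, ih, mul_assoc, ← pow_succ]

lemma conj_map_ker {X X' B : End F V} (h : X * B = B * X') :
    (LinearMap.ker X').map B ≤ LinearMap.ker X := by
  rintro _ ⟨v, hv, rfl⟩
  have := LinearMap.congr_fun h v
  simp only [Module.End.mul_apply] at this
  simp only [SetLike.mem_coe, LinearMap.mem_ker] at hv ⊢
  rw [this, hv, map_zero]

lemma conj_map_range {X X' B : End F V} (h : X * B = B * X') :
    (LinearMap.range X').map B ≤ LinearMap.range X := by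
  rintro _ ⟨_, ⟨v, rfl⟩, rfl⟩
  have := LinearMap.congr_fun h v
  simp only [Module.End.mul_apply] at this
  exact ⟨B v, this⟩

lemma conj_finrank_range {X X' B : End F V} (hB : Function.Injective B) (h : X * B = B * X') :
    finrank F (LinearMap.range X') = finrank F (LinearMap.range X) := by
  have hs : Function.Surjective B := LinearMap.injective_iff_surjective.mp hB
  have h1 : LinearMap.range X = (LinearMap.range X').map B := by
    rw [← LinearMap.range_comp, ← Module.End.mul_eq_comp, ← h, Module.End.mul_eq_comp,
      LinearMap.range_comp, LinearMap.range_eq_top.mpr hs, Submodule.map_top]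
  rw [h1]
  exact (LinearEquiv.finrank_eq (Submodule.equivMapOfInjective B hB _))

/-- Rank concavity. -/
lemma rank_sq (X : End F V) :
    2 * finrank F (LinearMap.range X) ≤ finrank F V + finrank F (LinearMap.range (X ^ 2)) := by
  have h1 := LinearMap.finrank_range_add_finrank_ker X
  have h2 := LinearMap.finrank_range_add_finrank_ker (X.domRestrict (LinearMap.range X))
  have h3 : LinearMap.range (X.domRestrict (LinearMap.range X)) = LinearMap.range (X ^ 2) := by
    rw [LinearMap.range_domRestrict, pow_two, Module.End.mul_eq_comp, LinearMap.range_comp]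
  have h4 : finrank F (LinearMap.ker (X.domRestrict (LinearMap.range X))) ≤
      finrank F (LinearMap.ker X) := by
    rw [LinearMap.ker_domRestrict]
    have := LinearEquiv.finrank_eq (Submodule.equivMapOfInjective (LinearMap.range X).subtype
      (Submodule.injective_subtype _) ((LinearMap.ker X).comap (LinearMap.range X).subtype))
    rw [this]
    exact Submodule.finrank_mono (by rintro _ ⟨v, hv, rfl⟩; exact hv)
  rw [h3] at h2
  omega

/-- Flags. -/
def HasFlag (Y X B C : End F V) : Prop :=
  ∃ W : ℕ → Submodule F V, W 0 = ⊥ ∧ W 4 = ⊤ ∧ (∀ i, (W (i + 1)).map Y ≤ W i) ∧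
    (∀ i, (W i).map X ≤ W i) ∧ (∀ i, (W i).map B ≤ W i) ∧ (∀ i, (W i).map C ≤ W i)

/-- A flag with one intermediate step. -/
lemma hasFlag_one {Y X B C : End F V} (U : Submodule F V) (hY : U.map Y ≤ ⊥)
    (hY' : (⊤ : Submodule F V).map Y ≤ U) (hX : U.map X ≤ U) (hB : U.map B ≤ U)
    (hC : U.map C ≤ U) : HasFlag Y X B C := by
  refine ⟨fun i => match i with | 0 => ⊥ | 1 => U | _ + 2 => ⊤, rfl, rfl, ?_, ?_, ?_, ?_⟩
  · rintro (_ | _ | i)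
    · exact hY
    · exact hY'
    · exact le_top
  all_goals
    rintro (_ | _ | i)
    · simp
    · assumption
    · exact le_top

lemma hasFlag_two {Y X B C : End F V} (L H : Submodule F V) (h1 : L.map Y ≤ ⊥)
    (h2 : H.map Y ≤ L)
    (h3 : (⊤ : Submodule F V).map Y ≤ H) (hX : L.map X ≤ L) (hB : L.map B ≤ L)
    (hC : L.map C ≤ L) (hX' : H.map X ≤ H) (hB' : H.map B ≤ H)
    (hC' : H.map C ≤ H) : HasFlag Y X B C := by
  refine ⟨fun i => match i with | 0 => ⊥ | 1 => L | 2 => H | _ + 3 => ⊤, rfl, rfl, ?_, ?_, ?_, ?_⟩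
  · rintro (_ | _ | _ | i)
    · exact h1
    · exact h2
    · exact h3
    · exact le_top
  all_goals
    rintro (_ | _ | _ | i)
    · simp
    · assumption
    · assumption
    · exact le_top

/-- Case `X³ ≠ 0`: the kernel flag. -/
lemma flag_regular (hn : finrank F V ≤ 4) (X X₁ X₂ B C : End F V)
    (c1 : Commute X X₁) (c2 : Commute X X₂)
    (nX : IsNilpotent X) (n1 : IsNilpotent X₁) (n2 : IsNilpotent X₂)
    (hB : Function.Injective B) (hC : Function.Injective C)
    (rB : X * B = B * X₁) (rC : X * C = C * X₂) (h3 : X ^ 3 ≠ 0) :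
    HasFlag (X₁ - X) X B C := by
  have e2 : X ^ 2 ≠ 0 := fun h => h3 (by rw [pow_succ, h, zero_mul])
  have e1 : X ^ 1 ≠ 0 := fun h => e2 (by rw [pow_succ, h, zero_mul])
  have e0 : X ^ 0 ≠ 0 := fun h => e1 (by rw [pow_succ, h, zero_mul])
  have s0 := range_pow_strict X nX 0 e0
  have s1 := range_pow_strict X nX 1 e1
  have s2 := range_pow_strict X nX 2 e2
  have s3 := range_pow_strict X nX 3 h3
  have k : ∀ i, finrank F (LinearMap.range (X ^ i)) + finrank F (LinearMap.ker (X ^ i))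
    = finrank F V := fun i => LinearMap.finrank_range_add_finrank_ker (X ^ i)
  have k0 := k 0
  have kd : ∀ i, i ≤ 3 → finrank F (LinearMap.ker (X ^ (i + 1))) ≤
      finrank F (LinearMap.ker (X ^ i)) + 1 := by
    intro i hi
    have a1 := k i
    have a2 := k (i + 1)
    interval_cases i <;> simp only [Nat.reduceAdd] at * <;> omega
  have mono : ∀ i, LinearMap.ker (X ^ i) ≤ LinearMap.ker (X ^ (i + 1)) := by
    intro i
    rw [pow_succ']; exact LinearMap.ker_le_ker_comp _ _
  have top4 : LinearMap.ker (X ^ 4) = ⊤ := by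
    apply Submodule.eq_top_of_finrank_eq
    have a2 := k 4
    simp only [Nat.reduceAdd] at *
    omega
  have step : ∀ Z : End F V, Commute X Z → IsNilpotent Z → ∀ i,
      (LinearMap.ker (X ^ (i + 1))).map Z ≤ LinearMap.ker (X ^ i) := by
    intro Z cZ nZ i
    by_cases hi : i ≤ 3
    · exact nil_step Z nZ _ _ (mono i) (map_ker_le_of_commute (cZ.pow_left i))
        (map_ker_le_of_commute (cZ.pow_left (i + 1))) (kd i hi)
    · have : LinearMap.ker (X ^ i) = ⊤ := by
        rw [eq_top_iff, ← top4]
        obtain ⟨j, rfl⟩ : ∃ j, i = j + 4 := ⟨i - 4, by omega⟩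
        rw [pow_add]; exact LinearMap.ker_le_ker_comp _ _
      rw [this]; exact le_top
  have kle : ∀ Z : End F V, Commute X Z → IsNilpotent Z → ∀ i,
      LinearMap.ker (X ^ i) ≤ LinearMap.ker (Z ^ i) := by
    intro Z cZ nZ i
    induction i with
    | zero => simp
    | succ i ih =>
      intro v hv
      have := ih (step Z cZ nZ i (Submodule.mem_map_of_mem hv))
      rw [LinearMap.mem_ker] at this ⊢
      rw [pow_succ, Module.End.mul_apply, this]
  refine ⟨fun i => LinearMap.ker (X ^ i), ?_, top4, ?_, ?_, ?_, ?_⟩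
  · simp [Module.End.one_eq_id]
  · intro i
    refine step _ (c1.sub_right (Commute.refl X)) ?_ i
    exact Commute.isNilpotent_sub c1.symm n1 nX
  · exact fun i => map_ker_le_of_commute ((Commute.refl X).pow_left i)
  · exact fun i => (Submodule.map_mono (kle X₁ c1 n1 i)).trans (conj_map_ker (conj_pow rB i))
  · exact fun i => (Submodule.map_mono (kle X₂ c2 n2 i)).trans (conj_map_ker (conj_pow rC i))

/-- Case `X³ = 0`, `X² ≠ 0`. -/
lemma flag_three (hn : finrank F V ≤ 4) (X X₁ X₂ B C : End F V)
    (c1 : Commute X X₁) (c2 : Commute X X₂)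
    (nX : IsNilpotent X) (n1 : IsNilpotent X₁) (n2 : IsNilpotent X₂)
    (hB : Function.Injective B) (hC : Function.Injective C)
    (rB : X * B = B * X₁) (rC : X * C = C * X₂) (h3 : X ^ 3 = 0) (h2 : X ^ 2 ≠ 0) :
    HasFlag (X₁ - X) X B C := by
  have e1 : X ^ 1 ≠ 0 := fun h => h2 (by rw [pow_succ, h, zero_mul])
  have e0 : X ^ 0 ≠ 0 := fun h => e1 (by rw [pow_succ, h, zero_mul])
  have s0 := range_pow_strict X nX 0 e0
  have s1 := range_pow_strict X nX 1 e1
  have s2 := range_pow_strict X nX 2 h2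
  have k : ∀ i, finrank F (LinearMap.range (X ^ i)) + finrank F (LinearMap.ker (X ^ i))
    = finrank F V := fun i => LinearMap.finrank_range_add_finrank_ker (X ^ i)
  have k0 := k 0
  have k1 := k 1
  have k2 := k 2
  have q := rank_sq X
  -- `im X ≤ ker X²`
  have ik : LinearMap.range X ≤ LinearMap.ker (X ^ 2) := by
    rintro _ ⟨v, rfl⟩
    have : (X ^ 2 * X) v = 0 := by rw [← pow_succ, h3]; rfl
    exact this
  have kk : LinearMap.ker X ≤ LinearMap.ker (X ^ 2) := by
    rw [pow_two]; exact LinearMap.ker_le_ker_comp _ _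
  have ik' : LinearMap.range (X ^ 2) ≤ LinearMap.ker X := by
    rintro _ ⟨v, rfl⟩
    have : (X * X ^ 2) v = 0 := by rw [← pow_succ', h3]; rfl
    exact this
  have f1 := Submodule.finrank_mono ik
  have p1 : finrank F (LinearMap.range (X ^ 1)) = finrank F (LinearMap.range X) := by
    rw [pow_one]
  have p2 : finrank F (LinearMap.ker (X ^ 1)) = finrank F (LinearMap.ker X) := by
    rw [pow_one]
  simp only [Nat.reduceAdd] at s0 s1 s2 k1 k2
  have r1 : finrank F (LinearMap.range X) = 2 := by omega
  have r2 : finrank F (LinearMap.range (X ^ 2)) = 1 := by omega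
  have kerd : finrank F (LinearMap.ker X) ≤ 2 := by omega
  have kerd2 : finrank F V = finrank F (LinearMap.ker (X ^ 2)) + 1 := by omega
  have hintr : finrank F (LinearMap.ker X ⊓ LinearMap.range X : Submodule F V) ≤ 1 := by
    -- `X` maps `range X` onto `range X²`
    by_contra hcon
    have : LinearMap.ker X ⊓ LinearMap.range X = LinearMap.range X :=
      Submodule.eq_of_le_of_finrank_le inf_le_right (by omega)
    apply h2
    ext v
    have h : X v ∈ LinearMap.ker X := by
      rw [inf_eq_right] at this
      exact this ⟨v, rfl⟩
    rw [pow_two]; simpa using h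
  have hH : LinearMap.ker (X ^ 2) = LinearMap.ker X ⊔ LinearMap.range X := by
    symm
    apply Submodule.eq_of_le_of_finrank_le (sup_le kk ik)
    have := Submodule.finrank_sup_add_finrank_inf_eq (LinearMap.ker X) (LinearMap.range X)
    omega
  have stepL : ∀ Z : End F V, Commute X Z → IsNilpotent Z →
      (LinearMap.range (X ^ 2)).map Z ≤ ⊥ := by
    intro Z cZ nZ
    exact nil_step Z nZ _ _ bot_le (by simp) (map_range_le_of_commute (cZ.pow_left 2))
      (by rw [r2]; omega)
  have stepV : ∀ Z : End F V, Commute X Z → IsNilpotent Z →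
      (⊤ : Submodule F V).map Z ≤ LinearMap.ker (X ^ 2) := by
    intro Z cZ nZ
    exact nil_step Z nZ _ _ le_top (map_ker_le_of_commute (cZ.pow_left 2)) le_top
      (by rw [finrank_top]; omega)
  have XH : (LinearMap.ker (X ^ 2)).map X ≤ LinearMap.range (X ^ 2) := by
    rw [hH, Submodule.map_sup]
    refine sup_le ?_ ?_
    · rintro _ ⟨v, hv, rfl⟩
      simp only [SetLike.mem_coe, LinearMap.mem_ker] at hv
      rw [hv]; exact zero_mem _
    · rw [← LinearMap.range_comp, pow_two]; exact le_rfl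
  have stepH : ∀ Z : End F V, Commute X Z → IsNilpotent Z →
      (LinearMap.ker (X ^ 2)).map Z ≤ LinearMap.range (X ^ 2) := by
    intro Z cZ nZ
    rw [hH, Submodule.map_sup]
    refine sup_le ?_ ?_
    · exact nil_step Z nZ _ _ ik' (map_range_le_of_commute (cZ.pow_left 2))
        (map_ker_le_of_commute cZ) (by omega)
    · rintro _ ⟨_, ⟨v, rfl⟩, rfl⟩
      have h := LinearMap.congr_fun cZ.eq v
      simp only [Module.End.mul_apply] at h
      rw [← h]
      exact XH (Submodule.mem_map_of_mem (stepV Z cZ nZ (Submodule.mem_map_of_mem trivial)))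
  have same : ∀ Z D : End F V, Commute X Z → IsNilpotent Z → Function.Injective D →
      X * D = D * Z → LinearMap.range (Z ^ 2) = LinearMap.range (X ^ 2) ∧
        LinearMap.ker (Z ^ 2) = LinearMap.ker (X ^ 2) := by
    intro Z D cZ nZ hD rD
    have hr := conj_finrank_range hD (conj_pow rD 2)
    constructor
    · apply Submodule.eq_of_le_of_finrank_le _ hr.ge
      rintro _ ⟨v, rfl⟩
      rw [pow_two Z]
      exact stepH Z cZ nZ (Submodule.mem_map_of_mem
        (stepV Z cZ nZ (Submodule.mem_map_of_mem trivial)))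
    · symm
      apply Submodule.eq_of_le_of_finrank_le
      · intro v hv
        have := stepL Z cZ nZ (Submodule.mem_map_of_mem
          (stepH Z cZ nZ (Submodule.mem_map_of_mem hv)))
        rw [LinearMap.mem_ker, pow_two]
        simpa using this
      · have := LinearMap.finrank_range_add_finrank_ker (Z ^ 2)
        omega
  obtain ⟨b1, b2⟩ := same X₁ B c1 n1 hB rB
  obtain ⟨g1, g2⟩ := same X₂ C c2 n2 hC rC
  have cY : Commute X (X₁ - X) := c1.sub_right (Commute.refl X)
  have nY : IsNilpotent (X₁ - X) := Commute.isNilpotent_sub c1.symm n1 nX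
  refine hasFlag_two (LinearMap.range (X ^ 2)) (LinearMap.ker (X ^ 2)) (stepL _ cY nY)
    (stepH _ cY nY) (stepV _ cY nY) ?_ ?_ ?_ ?_ ?_ ?_
  · exact map_range_le_of_commute ((Commute.refl X).pow_left 2)
  · exact (Submodule.map_mono b1.ge).trans (conj_map_range (conj_pow rB 2))
  · exact (Submodule.map_mono g1.ge).trans (conj_map_range (conj_pow rC 2))
  · exact map_ker_le_of_commute ((Commute.refl X).pow_left 2)
  · exact (Submodule.map_mono b2.ge).trans (conj_map_ker (conj_pow rB 2))
  · exact (Submodule.map_mono g2.ge).trans (conj_map_ker (conj_pow rC 2))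

/-- Case `X² = 0`. -/
lemma flag_sq_zero (hn : finrank F V ≤ 4) (two : (2 : F) ≠ 0) (X X₁ X₂ B C : End F V)
    (c1 : Commute X X₁) (c2 : Commute X X₂)
    (rel : X + X₂ + X * X₂ = X₁ + X₁ + X₁ * X₁)
    (hB : Function.Injective B) (hC : Function.Injective C)
    (rB : X * B = B * X₁) (rC : X * C = C * X₂) (h2 : X ^ 2 = 0) :
    HasFlag (X₁ - X) X B C := by
  have cancel : ∀ Z : End F V, Z + Z = 0 → Z = 0 := by
    intro Z hZ
    rw [← two_smul F] at hZ
    exact (smul_eq_zero.mp hZ).resolve_left two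
  have sqz : ∀ Z D : End F V, Function.Injective D → X * D = D * Z → Z ^ 2 = 0 := by
    intro Z D hD rD
    have := conj_pow rD 2
    rw [h2, zero_mul] at this
    ext v
    apply hD
    have := LinearMap.congr_fun this v
    simpa using this.symm
  have z1 := sqz X₁ B hB rB
  have z2 := sqz X₂ C hC rC
  rw [pow_two] at h2 z1 z2
  have x20 : X * X₂ = 0 := by
    apply cancel
    have e : (X₁ + X₁) * (X₁ + X₁) = 0 := by
      simp only [mul_add, add_mul, z1, add_zero]
    have e' : X₁ + X₁ = X + X₂ + X * X₂ := by rw [rel, z1, add_zero]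
    rw [e'] at e
    have e3 : X₂ * X = X * X₂ := c2.eq.symm
    have e4 : X * (X * X₂) = 0 := by rw [← mul_assoc, h2, zero_mul]
    have e5 : X₂ * (X * X₂) = 0 := by rw [← mul_assoc, e3, mul_assoc, z2, mul_zero]
    have e6 : X * X₂ * X = 0 := by rw [mul_assoc, e3, e4]
    have e7 : X * X₂ * X₂ = 0 := by rw [mul_assoc, z2, mul_zero]
    have e8 : X * X₂ * (X * X₂) = 0 := by rw [mul_assoc, e5, mul_zero]
    simpa only [mul_add, add_mul, h2, z2, e3, e4, e5, e6, e7, e8, add_zero, zero_add] using e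
  have rel' : X + X₂ = X₁ + X₁ := by simpa only [x20, z1, add_zero] using rel
  have x2e : X₂ = X₁ + X₁ - X := by rw [← rel']; abel
  have x10 : X * X₁ = 0 := by
    apply cancel
    rw [← mul_add, ← rel', mul_add, h2, x20, add_zero]
  have x01 : X₁ * X = 0 := by rw [← c1.eq, x10]
  have app : ∀ {P Q : End F V}, P * Q = 0 → ∀ v, P (Q v) = 0 := by
    intro P Q h v
    simpa using LinearMap.congr_fun h v
  have r1 := conj_finrank_range hB rB
  have r2 := conj_finrank_range hC rC
  have ik : LinearMap.range X ≤ LinearMap.ker X := by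
    rintro _ ⟨v, rfl⟩
    exact app h2 v
  have ik1 : LinearMap.range X₁ ≤ LinearMap.ker X := by
    rintro _ ⟨v, rfl⟩
    exact app x10 v
  have dk := LinearMap.finrank_range_add_finrank_ker X
  have dk1 := LinearMap.finrank_range_add_finrank_ker X₁
  have dk2 := LinearMap.finrank_range_add_finrank_ker X₂
  have caseR : LinearMap.range X₁ = LinearMap.range X → HasFlag (X₁ - X) X B C := by
    intro e
    have e2 : LinearMap.range X₂ = LinearMap.range X := by
      apply Submodule.eq_of_le_of_finrank_le _ r2.ge
      rintro _ ⟨v, rfl⟩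
      have h1 : X₁ v ∈ LinearMap.range X := by rw [← e]; exact ⟨v, rfl⟩
      rw [x2e]
      exact sub_mem (add_mem h1 h1) ⟨v, rfl⟩
    refine hasFlag_one (LinearMap.range X) ?_ ?_ ?_ ?_ ?_
    · rintro _ ⟨_, ⟨v, rfl⟩, rfl⟩
      simp [app x01, app h2]
    · rintro _ ⟨v, -, rfl⟩
      have h1 : X₁ v ∈ LinearMap.range X := by rw [← e]; exact ⟨v, rfl⟩
      exact sub_mem h1 ⟨v, rfl⟩
    · exact map_range_le_of_commute (Commute.refl X)
    · exact (Submodule.map_mono e.ge).trans (conj_map_range rB)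
    · exact (Submodule.map_mono e2.ge).trans (conj_map_range rC)
  by_cases hr : finrank F (LinearMap.range X) ≤ 1
  · by_cases e : LinearMap.range X₁ = LinearMap.range X
    · exact caseR e
    -- the kernels agree
    have hk : LinearMap.ker X ≤ LinearMap.ker X₁ := by
      intro v hv
      rw [LinearMap.mem_ker] at hv ⊢
      by_contra hv1
      apply e
      have l1 : X₁ v ∈ LinearMap.range X₂ := by
        refine ⟨(2 : F)⁻¹ • v, ?_⟩
        have : X₂ v = (2 : F) • X₁ v := by
          rw [x2e, two_smul]; simp [hv]
        rw [map_smul, this, smul_smul, inv_mul_cancel₀ two, one_smul]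
      have key : ∀ D : End F V, finrank F (LinearMap.range D) ≤ 1 → X₁ v ∈ LinearMap.range D →
          LinearMap.range D = Submodule.span F {X₁ v} := by
        intro D hD hm
        symm
        apply Submodule.eq_of_le_of_finrank_le
        · rw [Submodule.span_singleton_le_iff_mem]; exact hm
        · rw [finrank_span_singleton hv1]; exact hD
      have q1 := key X₁ (by omega) ⟨v, rfl⟩
      have q2 := key X₂ (by omega) l1
      symm
      apply Submodule.eq_of_le_of_finrank_le _ r1.le
      rintro _ ⟨u, rfl⟩
      have : X u = X₁ u + X₁ u - X₂ u := by rw [x2e]; simp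
      rw [this]
      have m1 : X₁ u ∈ LinearMap.range X₁ := ⟨u, rfl⟩
      have m2 : X₂ u ∈ LinearMap.range X₁ := by rw [q1, ← q2]; exact ⟨u, rfl⟩
      exact sub_mem (add_mem m1 m1) m2
    have hk2 : LinearMap.ker X ≤ LinearMap.ker X₂ := by
      intro v hv
      have h1 := hk hv
      rw [LinearMap.mem_ker] at hv h1 ⊢
      rw [x2e]; simp [hv, h1]
    refine hasFlag_one (LinearMap.ker X) ?_ ?_ ?_ ?_ ?_
    · rintro _ ⟨v, hv, rfl⟩
      have h1 := hk hv
      simp only [SetLike.mem_coe, LinearMap.mem_ker] at hv h1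
      simp [hv, h1]
    · rintro _ ⟨v, -, rfl⟩
      exact sub_mem (ik1 ⟨v, rfl⟩) (ik ⟨v, rfl⟩)
    · exact map_ker_le_of_commute (Commute.refl X)
    · exact (Submodule.map_mono hk).trans (conj_map_ker rB)
    · exact (Submodule.map_mono hk2).trans (conj_map_ker rC)
  · apply caseR
    have a := Submodule.eq_of_le_of_finrank_le ik (by omega)
    have b := Submodule.eq_of_le_of_finrank_le ik1 (by omega)
    rw [a, b]

lemma flag_unip (hn : finrank F V ≤ 4) (two : (2 : F) ≠ 0) (X X₁ X₂ B C : End F V)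
    (c1 : Commute X X₁) (c2 : Commute X X₂)
    (nX : IsNilpotent X) (n1 : IsNilpotent X₁) (n2 : IsNilpotent X₂)
    (rel : X + X₂ + X * X₂ = X₁ + X₁ + X₁ * X₁)
    (hB : Function.Injective B) (hC : Function.Injective C)
    (rB : X * B = B * X₁) (rC : X * C = C * X₂) :
    HasFlag (X₁ - X) X B C := by
  by_cases h2 : X ^ 2 = 0
  · exact flag_sq_zero hn two X X₁ X₂ B C c1 c2 rel hB hC rB rC h2
  by_cases h3 : X ^ 3 = 0
  · exact flag_three hn X X₁ X₂ B C c1 c2 nX n1 n2 hB hC rB rC h3 h2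
  · exact flag_regular hn X X₁ X₂ B C c1 c2 nX n1 n2 hB hC rB rC h3

/-- The flag for unipotent `T`. -/
lemma flag_unip' (hn : finrank F V ≤ 4) (two : (2 : F) ≠ 0) (A T B C : End F V)
    (cAT : Commute A T) (nA : IsNilpotent (A - 1)) (nT : IsNilpotent (T - 1))
    (hB : Function.Injective B) (hC : Function.Injective C)
    (rB : T * B = B * (A * T)) (rC : T * C = C * (A * A * T)) :
    HasFlag (A - 1) 1 B C := by
  have cA1 : Commute (A - 1) (T - 1) :=
    ((cAT.sub_right (Commute.one_right _)).sub_left (Commute.one_left _))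
  have cT : Commute T (A * T) := cAT.symm.mul_right (Commute.refl T)
  have cT2 : Commute T (A * A * T) := (cAT.symm.mul_right cAT.symm).mul_right (Commute.refl T)
  have nAT : IsNilpotent (A * T - 1) := by
    have : A * T - 1 = (A - 1) * T + (T - 1) := by noncomm_ring
    rw [this]
    have c : Commute (A - 1) T := cAT.sub_left (Commute.one_left _)
    refine Commute.isNilpotent_add ?_ (c.isNilpotent_mul_right nA) nT
    exact cA1.mul_left ((Commute.refl T).sub_right (Commute.one_right _))
  have nAAT : IsNilpotent (A * A * T - 1) := by
    have : A * A * T - 1 = (A - 1) * (A * T) + (A * T - 1) := by noncomm_ring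
    rw [this]
    have cAA : Commute A (A * T) := (Commute.refl A).mul_right cAT
    have c : Commute (A - 1) (A * T) := cAA.sub_left (Commute.one_left _)
    refine Commute.isNilpotent_add ?_ (c.isNilpotent_mul_right nA) nAT
    exact (c.sub_right (Commute.one_right _)).mul_left
      ((Commute.refl _).sub_right (Commute.one_right _))
  obtain ⟨W, w0, w4, wY, wX, wB, wC⟩ := flag_unip hn two (T - 1) (A * T - 1) (A * A * T - 1) B C
    ((cT.sub_right (Commute.one_right _)).sub_left (Commute.one_left _))
    ((cT2.sub_right (Commute.one_right _)).sub_left (Commute.one_left _)) nT nAT nAAT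
    (by
      have e : T * (A * A * T) = A * T * (A * T) := by
        rw [← mul_assoc, ← mul_assoc, ← cAT.eq]; simp only [mul_assoc]
      have : (T - 1) + (A * A * T - 1) + (T - 1) * (A * A * T - 1) = T * (A * A * T) - 1 := by
        noncomm_ring
      rw [this, e]; noncomm_ring) hB hC
    (by rw [sub_mul, rB, mul_sub, one_mul, mul_one]) (by rw [sub_mul, rC, mul_sub, one_mul, mul_one])
  refine ⟨W, w0, w4, ?_, ?_, wB, wC⟩
  · intro i
    -- `T` is injective and preserves `W (i+1)`
    have hT : ∀ j, (W j).map T ≤ W j := by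
      rintro j _ ⟨v, hv, rfl⟩
      have : T v = (T - 1) v + v := by simp
      rw [this]
      exact add_mem (wX j (Submodule.mem_map_of_mem hv)) hv
    have uT : IsUnit T := by
      have := nT.isUnit_one_add
      simpa using this
    have iT : Function.Injective T := ((Module.End.isUnit_iff _).mp uT).1
    have eT : (W (i + 1)).map T = W (i + 1) := by
      apply Submodule.eq_of_le_of_finrank_le (hT _)
      rw [← LinearEquiv.finrank_eq (Submodule.equivMapOfInjective T iT (W (i + 1)))]
    rw [← eT]
    rintro _ ⟨_, ⟨v, hv, rfl⟩, rfl⟩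
    have : (A - 1) (T v) = (A * T - 1 - (T - 1)) v := by simp
    rw [this]
    exact wY i (Submodule.mem_map_of_mem hv)
  · intro i
    rintro _ ⟨v, hv, rfl⟩
    exact hv

end Flag

section Global
variable {F V : Type*} [Field F] [AddCommGroup V] [Module F V] [FiniteDimensional F V]

lemma maxGen_le_add_nil (S N : End F V) (h : Commute S N) (hN : IsNilpotent N) (l : F) :
    S.maxGenEigenspace l ≤ (S + N).maxGenEigenspace l := by
  intro v hv
  have h0 : v ∈ N.maxGenEigenspace 0 := by
    rw [Module.End.mem_maxGenEigenspace]
    obtain ⟨k, hk⟩ := hN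
    exact ⟨k, by rw [zero_smul, sub_zero, hk]; rfl⟩
  have := Module.End.genEigenspace_inf_le_add S N l 0 ⊤ ⊤ h ⟨hv, h0⟩
  simpa using this

lemma conj_map_maxGen {X X' B : End F V} (h : X * B = B * X') (l : F) :
    (X'.maxGenEigenspace l).map B ≤ X.maxGenEigenspace l := by
  rintro _ ⟨v, hv, rfl⟩
  simp only [SetLike.mem_coe, Module.End.mem_maxGenEigenspace] at hv ⊢
  obtain ⟨k, hk⟩ := hv
  refine ⟨k, ?_⟩
  have h' : (X - l • 1) * B = B * (X' - l • 1) := by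
    rw [sub_mul, mul_sub, h, smul_mul_assoc, one_mul, mul_smul_comm, mul_one]
  have := LinearMap.congr_fun (conj_pow h' k) v
  simp only [Module.End.mul_apply] at this
  rw [this, hk, map_zero]

lemma flag_local (hn : finrank F V ≤ 4) (two : (2 : F) ≠ 0) (A T B C : End F V)
    (cAT : Commute A T) (nA : IsNilpotent (A - 1)) (hT : Function.Injective T)
    (hB : Function.Injective B) (hC : Function.Injective C)
    (rB : T * B = B * (A * T)) (rC : T * C = C * (A * A * T)) (l : F) :
    ∃ W : ℕ → Submodule F V, W 0 = ⊥ ∧ W 4 = T.maxGenEigenspace l ∧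
      (∀ i, (W (i + 1)).map (A - 1) ≤ W i) ∧
      (∀ i, (W i).map B ≤ W i) ∧ (∀ i, (W i).map C ≤ W i) := by
  by_cases hl : l = 0
  · refine ⟨fun _ => ⊥, rfl, ?_, by simp, by simp, by simp⟩
    symm
    rw [eq_bot_iff]
    intro v hv
    rw [Module.End.mem_maxGenEigenspace] at hv
    obtain ⟨k, hk⟩ := hv
    rw [hl, zero_smul, sub_zero] at hk
    have : Function.Injective (T ^ k) := by
      rw [Module.End.coe_pow]; exact hT.iterate k
    exact this (by rw [hk, map_zero])
  have cN : Commute (A - 1) T := cAT.sub_left (Commute.one_left _)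
  have e1 : T + (A - 1) * T = A * T := by noncomm_ring
  have e2 : A * T + (A - 1) * (A * T) = A * A * T := by noncomm_ring
  have cNAT : Commute (A - 1) (A * T) :=
    ((Commute.refl A).mul_right cAT).sub_left (Commute.one_left _)
  have i1 : T.maxGenEigenspace l ≤ (A * T).maxGenEigenspace l := by
    have := maxGen_le_add_nil T ((A - 1) * T) (cN.symm.mul_right (Commute.refl T))
      (cN.isNilpotent_mul_right nA) l
    rwa [e1] at this
  have i2 : T.maxGenEigenspace l ≤ (A * A * T).maxGenEigenspace l := by
    have := maxGen_le_add_nil (A * T) ((A - 1) * (A * T))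
      (cNAT.symm.mul_right (Commute.refl _))
      (cNAT.isNilpotent_mul_right nA) l
    rw [e2] at this
    exact i1.trans this
  set U := T.maxGenEigenspace l with hU
  have mB : ∀ v ∈ U, B v ∈ U := fun v hv =>
    conj_map_maxGen rB l (Submodule.mem_map_of_mem (i1 hv))
  have mC : ∀ v ∈ U, C v ∈ U := fun v hv =>
    conj_map_maxGen rC l (Submodule.mem_map_of_mem (i2 hv))
  have mA : ∀ v ∈ U, A v ∈ U := Module.End.mapsTo_maxGenEigenspace_of_comm cAT.symm l
  have mT : ∀ v ∈ U, T v ∈ U := Module.End.mapsTo_maxGenEigenspace_of_comm (Commute.refl T) l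
  have happ : ∀ {P Q : End F V}, P = Q → ∀ v, P v = Q v := fun h v => by rw [h]
  obtain ⟨W, w0, w4, wY, -, wB, wC⟩ := flag_unip' (F := F) (V := U)
    ((Submodule.finrank_le U).trans hn) two (A.restrict mA) (l⁻¹ • T.restrict mT)
    (B.restrict mB) (C.restrict mC)
    (by
      ext v
      have := happ cAT.eq v
      simp at this
      simp [this])
    (by
      obtain ⟨k, hk⟩ := nA
      refine ⟨k, ?_⟩
      have mA1 : ∀ v ∈ U, (A - 1) v ∈ U := fun v hv => sub_mem (mA v hv) hv
      have : A.restrict mA - 1 = (A - 1).restrict mA1 := by ext v; simp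
      rw [this, Module.End.pow_restrict]
      ext v
      simp [hk])
    (by
      have mT1 : ∀ v ∈ U, (T - algebraMap F (End F V) l) v ∈ U :=
        fun v hv => sub_mem (mT v hv) (by simpa using U.smul_mem l hv)
      have n := Module.End.isNilpotent_restrict_maxGenEigenspace_sub_algebraMap T l mT1
      have : l⁻¹ • T.restrict mT - 1 =
          l⁻¹ • (T - algebraMap F (End F V) l).restrict mT1 := by
        ext v
        simp [smul_sub, smul_smul, hl]
      rw [this]
      exact n.smul l⁻¹)
    (by
      intro x y hxy
      apply Subtype.ext
      apply hB
      exact congrArg Subtype.val hxy)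
    (by
      intro x y hxy
      apply Subtype.ext
      apply hC
      exact congrArg Subtype.val hxy)
    (by
      ext v
      have := happ rB v
      simp at this
      simp [this])
    (by
      ext v
      have := happ rC v
      simp at this
      simp [this])
  refine ⟨fun i => (W i).map U.subtype, by simp [w0], by simp [w4], ?_, ?_, ?_⟩
  · rintro i _ ⟨_, ⟨v, hv, rfl⟩, rfl⟩
    exact ⟨_, wY i (Submodule.mem_map_of_mem hv), by simp⟩
  · rintro i _ ⟨_, ⟨v, hv, rfl⟩, rfl⟩
    exact ⟨_, wB i (Submodule.mem_map_of_mem hv), by simp⟩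
  · rintro i _ ⟨_, ⟨v, hv, rfl⟩, rfl⟩
    exact ⟨_, wC i (Submodule.mem_map_of_mem hv), by simp⟩

lemma flag_global [IsAlgClosed F] (hn : finrank F V ≤ 4) (two : (2 : F) ≠ 0) (A T B C : End F V)
    (cAT : Commute A T) (nA : IsNilpotent (A - 1)) (hT : Function.Injective T)
    (hB : Function.Injective B) (hC : Function.Injective C)
    (rB : T * B = B * (A * T)) (rC : T * C = C * (A * A * T)) :
    HasFlag (A - 1) 1 B C := by
  choose W w0 w4 wY wB wC using flag_local hn two A T B C cAT nA hT hB hC rB rC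
  refine ⟨fun i => ⨆ l, W l i, by simp [w0], ?_, ?_, ?_, ?_, ?_⟩
  · simp only [w4]
    exact Module.End.iSup_maxGenEigenspace_eq_top T
  · intro i
    rw [Submodule.map_iSup]
    exact iSup_mono fun l => wY l i
  · rintro i _ ⟨v, hv, rfl⟩
    exact hv
  · intro i
    rw [Submodule.map_iSup]
    exact iSup_mono fun l => wB l i
  · intro i
    rw [Submodule.map_iSup]
    exact iSup_mono fun l => wC l i

/-- Maps lowering the flag by `k`. -/
def Low (W : ℕ → Submodule F V) (k : ℕ) (Z : End F V) : Prop :=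
  ∀ i, ∀ v ∈ W i, Z v ∈ W (i - k)

lemma Low.mul {W : ℕ → Submodule F V} {k l : ℕ} {Z Z' : End F V} (h : Low W k Z)
    (h' : Low W l Z') : Low W (k + l) (Z * Z') := by
  intro i v hv
  have := h _ _ (h' i v hv)
  rwa [Nat.sub_sub, add_comm l k] at this

lemma Low.sub {W : ℕ → Submodule F V} {k : ℕ} {Z Z' : End F V} (h : Low W k Z)
    (h' : Low W k Z') : Low W k (Z - Z') :=
  fun i v hv => sub_mem (h i v hv) (h' i v hv)

lemma Low.add {W : ℕ → Submodule F V} {k : ℕ} {Z Z' : End F V} (h : Low W k Z)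
    (h' : Low W k Z') : Low W k (Z + Z') :=
  fun i v hv => add_mem (h i v hv) (h' i v hv)

lemma Low.inv {W : ℕ → Submodule F V} {g : (End F V)ˣ} (h : Low W 0 (g : End F V)) :
    Low W 0 ((g⁻¹ : (End F V)ˣ) : End F V) := by
  intro i v hv
  have inj : Function.Injective (g : End F V) := ((Module.End.isUnit_iff _).mp g.isUnit).1
  have e : (W i).map (g : End F V) = W i := by
    apply Submodule.eq_of_le_of_finrank_le
    · rintro _ ⟨u, hu, rfl⟩
      exact h i u hu
    · rw [← LinearEquiv.finrank_eq (Submodule.equivMapOfInjective (g : End F V) inj (W i))]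
  rw [← e] at hv
  obtain ⟨u, hu, rfl⟩ := hv
  have : ((g⁻¹ : (End F V)ˣ) : End F V) ((g : End F V) u) = u := by
    rw [← Module.End.mul_apply, Units.inv_mul]; rfl
  rw [this]
  exact hu

lemma Low.one {W : ℕ → Submodule F V} : Low W 0 (1 : End F V) := fun _ _ hv => hv

open scoped commutatorElement in
lemma Low.comm {W : ℕ → Submodule F V} (k : ℕ) {g h : (End F V)ˣ}
    (g0 : Low W 0 (g : End F V)) (h0 : Low W 0 (h : End F V))
    (hg : Low W k ((g : End F V) - 1)) (hh : Low W k ((h : End F V) - 1)) :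
    Low W (k + k) (((⁅g, h⁆ : (End F V)ˣ) : End F V) - 1) := by
  have e : ((⁅g, h⁆ : (End F V)ˣ) : End F V) - 1 =
      (((g : End F V) - 1) * ((h : End F V) - 1) - ((h : End F V) - 1) * ((g : End F V) - 1)) *
        (((g⁻¹ : (End F V)ˣ) : End F V) * ((h⁻¹ : (End F V)ˣ) : End F V)) := by
    have e1 : (((g : End F V) - 1) * ((h : End F V) - 1) -
        ((h : End F V) - 1) * ((g : End F V) - 1)) = (g : End F V) * h - h * g := by noncomm_ring
    have e2 : (h : End F V) * g * (((g⁻¹ : (End F V)ˣ) : End F V) *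
        ((h⁻¹ : (End F V)ˣ) : End F V)) = 1 := by
      rw [mul_assoc, ← mul_assoc (g : End F V), Units.mul_inv, one_mul, Units.mul_inv]
    rw [e1, sub_mul, e2, commutatorElement_def]
    push_cast
    noncomm_ring
  rw [e]
  have := ((hg.mul hh).sub (hh.mul hg)).mul (g0.inv.mul h0.inv)
  simpa using this

lemma Low.mono0 {W : ℕ → Submodule F V} (hW : ∀ i, W i ≤ W (i + 1)) {k : ℕ} {Z : End F V}
    (h : Low W k Z) : Low W 0 Z := by
  intro i v hv
  exact (monotone_nat_of_le_succ hW) (by omega) (h i v hv)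

open scoped commutatorElement in
lemma word_trivial (A B C : (End F V)ˣ)
    (h : HasFlag ((A : End F V) - 1) 1 (B : End F V) (C : End F V)) :
    ⁅⁅A, B * A * B⁻¹⁆, ⁅A, C * A * C⁻¹⁆⁆ = 1 := by
  obtain ⟨W', w0', w4', wY', -, wB', wC'⟩ := h
  -- make the flag increasing
  obtain ⟨W, hW, w0, w4, wY, wB, wC⟩ : ∃ W : ℕ → Submodule F V, (∀ i, W i ≤ W (i + 1)) ∧
      W 0 = ⊥ ∧ W 4 = ⊤ ∧ (∀ i, (W (i + 1)).map ((A : End F V) - 1) ≤ W i) ∧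
      (∀ i, (W i).map (B : End F V) ≤ W i) ∧ (∀ i, (W i).map (C : End F V) ≤ W i) := by
    have aux : ∀ (D : End F V) (P : ℕ → Submodule F V), (∀ j, (W' j).map D ≤ P j) →
        ∀ i, (⨆ j : Fin (i + 1), W' j).map D ≤ ⨆ j : Fin (i + 1), P j := by
      intro D P hP i
      rw [Submodule.map_iSup]
      exact iSup_mono fun j => hP j
    refine ⟨fun i => ⨆ j : Fin (i + 1), W' j, ?_, ?_, ?_, ?_, ?_, ?_⟩
    · intro i
      exact iSup_le fun j => le_iSup (fun j : Fin (i + 1 + 1) => W' j) j.castSucc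
    · simp [w0']
    · rw [eq_top_iff, ← w4']
      exact le_iSup (fun j : Fin (4 + 1) => W' j) (Fin.last 4)
    · intro i
      rw [Submodule.map_iSup]
      refine iSup_le fun j => ?_
      rcases j with ⟨_ | j, hj⟩
      · simp [w0']
      · exact (wY' j).trans (le_iSup (fun j : Fin (i + 1) => W' j) ⟨j, by omega⟩)
    · exact aux _ _ wB'
    · exact aux _ _ wC'
  have lA : Low W 1 ((A : End F V) - 1) := by
    rintro (_ | i) v hv
    · rw [w0, Submodule.mem_bot] at hv
      rw [hv, map_zero]; exact zero_mem _
    · exact wY i (Submodule.mem_map_of_mem hv)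
  have lB : Low W 0 (B : End F V) := fun i v hv => wB i (Submodule.mem_map_of_mem hv)
  have lC : Low W 0 (C : End F V) := fun i v hv => wC i (Submodule.mem_map_of_mem hv)
  have to0 : ∀ (k : ℕ) (g : (End F V)ˣ), Low W k ((g : End F V) - 1) → Low W 0 (g : End F V) := by
    intro k g hg
    have := (hg.mono0 hW).add Low.one
    simpa using this
  have lconj : ∀ D : (End F V)ˣ, Low W 0 (D : End F V) →
      Low W 1 (((D * A * D⁻¹ : (End F V)ˣ) : End F V) - 1) := by
    intro D hD
    have := (hD.mul lA).mul hD.inv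
    have e : ((D * A * D⁻¹ : (End F V)ˣ) : End F V) - 1 =
        (D : End F V) * ((A : End F V) - 1) * ((D⁻¹ : (End F V)ˣ) : End F V) := by
      rw [mul_sub, sub_mul, mul_one, Units.mul_inv]
      push_cast
      rfl
    rw [e]
    simpa using this
  have l2 : ∀ D : (End F V)ˣ, Low W 0 (D : End F V) →
      Low W (1 + 1) (((⁅A, D * A * D⁻¹⁆ : (End F V)ˣ) : End F V) - 1) := fun D hD =>
    Low.comm 1 (to0 1 _ lA) (to0 1 _ (lconj D hD)) lA (lconj D hD)
  have l4 := Low.comm (1 + 1) (to0 _ _ (l2 B lB)) (to0 _ _ (l2 C lC)) (l2 B lB) (l2 C lC)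
  apply Units.ext
  rw [Units.val_one, ← sub_eq_zero]
  ext v
  have hv : v ∈ W 4 := by rw [w4]; trivial
  have := l4 4 v hv
  simp only [Nat.reduceAdd, Nat.sub_self, w0, Submodule.mem_bot] at this
  simpa using this

end Global

section Torsion
variable {F V : Type*} [Field F] [AddCommGroup V] [Module F V] [FiniteDimensional F V]

lemma finrank_finset_sup {ι : Type*} [DecidableEq ι] (W : ι → Submodule F V) (hW : iSupIndep W)
    (s : Finset ι) : finrank F (s.sup W : Submodule F V) = ∑ i ∈ s, finrank F (W i) := by
  induction s using Finset.induction_on with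
  | empty => simp
  | insert a s ha ih =>
    rw [Finset.sup_insert, Finset.sum_insert ha, ← ih]
    have hd : Disjoint (W a) (s.sup W) := by
      refine (hW a).mono_right ?_
      refine Finset.sup_le fun j hj => ?_
      exact le_iSup₂_of_le j (fun h => ha (h ▸ hj)) le_rfl
    have := Submodule.finrank_sup_add_finrank_inf_eq (W a) (s.sup W)
    rw [hd.eq_bot, finrank_bot] at this
    omega

lemma finrank_maxGen_eq {ι : Type*} [Fintype ι] [DecidableEq ι] [DecidableEq F]
    (W : ι → Submodule F V) (hW : iSupIndep W)
    (htop : ⨆ i, W i = ⊤) (f : End F V) (c : ι → F) (hc : ∀ i, W i ≤ f.maxGenEigenspace (c i))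
    (μ : F) : finrank F (f.maxGenEigenspace μ) =
      ∑ i ∈ Finset.univ.filter (fun i => c i = μ), finrank F (W i) := by
  rw [← finrank_finset_sup W hW]
  suffices hs : f.maxGenEigenspace μ = (Finset.univ.filter (fun i => c i = μ)).sup W by rw [hs]
  set P := (Finset.univ.filter (fun i => c i = μ)).sup W with hP
  set Q := (Finset.univ.filter (fun i => ¬ c i = μ)).sup W with hQ
  have hPQ : P ⊔ Q = ⊤ := by
    rw [eq_top_iff, ← htop]
    refine iSup_le fun i => ?_
    by_cases h : c i = μ
    · exact le_sup_of_le_left (Finset.le_sup (f := W) (by simp [h]))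
    · exact le_sup_of_le_right (Finset.le_sup (f := W) (by simp [h]))
  have hPV : P ≤ f.maxGenEigenspace μ := by
    refine Finset.sup_le fun i hi => ?_
    have : c i = μ := by simpa using hi
    rw [← this]; exact hc i
  have hd : Disjoint (f.maxGenEigenspace μ) Q := by
    refine (f.independent_maxGenEigenspace μ).mono_right ?_
    refine Finset.sup_le fun i hi => ?_
    have : c i ≠ μ := by simpa using hi
    exact (hc i).trans (le_iSup₂_of_le (c i) this le_rfl)
  have := sup_inf_assoc_of_le Q hPV
  rw [hPQ, top_inf_eq, inf_comm Q, hd.eq_bot, sup_bot_eq] at this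
  exact this

lemma maxGen_mul_le (A T : End F V) (h : Commute A T) (a t : F) :
    A.maxGenEigenspace a ⊓ T.maxGenEigenspace t ≤ (A * T).maxGenEigenspace (a * t) := by
  have cAT : Commute (A - a • 1) T := h.sub_left (Algebra.commute_algebraMap_left a T)
  have s1 : A.maxGenEigenspace a ≤ ((A - a • 1) * T).maxGenEigenspace 0 := by
    intro v hv
    rw [Module.End.mem_maxGenEigenspace] at hv ⊢
    obtain ⟨k, hk⟩ := hv
    refine ⟨k, ?_⟩
    rw [zero_smul, sub_zero, cAT.mul_pow, (cAT.pow_pow k k).eq, Module.End.mul_apply, hk, map_zero]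
  have s2 : T.maxGenEigenspace t ≤ (a • T).maxGenEigenspace (a * t) :=
    Module.End.genEigenspace_le_smul T t a ⊤
  have c : Commute ((A - a • 1) * T) (a • T) :=
    (cAT.mul_left (Commute.refl T)).smul_right a
  have e : (A - a • 1) * T + a • T = A * T := by
    rw [sub_mul, smul_mul_assoc, one_mul, sub_add_cancel]
  intro v hv
  have := Module.End.genEigenspace_inf_le_add _ _ 0 (a * t) ⊤ ⊤ c ⟨s1 hv.1, s2 hv.2⟩
  rw [e] at this
  simpa using this

lemma conj_finrank_maxGen {X X' B : End F V} (hB : Function.Injective B) (h : X * B = B * X')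
    (l : F) : finrank F (X'.maxGenEigenspace l) = finrank F (X.maxGenEigenspace l) := by
  have hs : Function.Surjective B := LinearMap.injective_iff_surjective.mp hB
  have h1 : X.maxGenEigenspace l = (X'.maxGenEigenspace l).map B := by
    apply le_antisymm _ (conj_map_maxGen h l)
    intro v hv
    obtain ⟨u, rfl⟩ := hs v
    refine Submodule.mem_map_of_mem ?_
    rw [Module.End.mem_maxGenEigenspace] at hv ⊢
    obtain ⟨k, hk⟩ := hv
    refine ⟨k, hB ?_⟩
    have h' : (X - l • 1) * B = B * (X' - l • 1) := by
      rw [sub_mul, mul_sub, h, smul_mul_assoc, one_mul, mul_smul_comm, mul_one]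
    have := LinearMap.congr_fun (conj_pow h' k) u
    simp only [Module.End.mul_apply] at this
    rw [← this, hk, map_zero]
  rw [h1]
  exact LinearEquiv.finrank_eq (Submodule.equivMapOfInjective B hB _)

/-- Every additive functional on the multiplicative group of the field kills the eigenvalues
of `A`. -/
lemma eig_killed [IsAlgClosed F] (A T B C : End F V) (cAT : Commute A T)
    (hA : Function.Injective A) (hT : Function.Injective T)
    (hB : Function.Injective B) (hC : Function.Injective C)
    (rB : T * B = B * (A * T)) (rC : T * C = C * (A * A * T))
    (φ : F → ℚ) (hφ : ∀ x y, x ≠ 0 → y ≠ 0 → φ (x * y) = φ x + φ y)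
    (a : F) (ha : A.maxGenEigenspace a ≠ ⊥) : φ a = 0 := by
  classical
  let f : Fin 2 → End F V := ![A, T]
  have hf : ∀ i j, Commute (f i) (f j) := by
    intro i j
    fin_cases i <;> fin_cases j
    · exact Commute.refl A
    · exact cAT
    · exact cAT.symm
    · exact Commute.refl T
  let W₀ : (Fin 2 → F) → Submodule F V := fun χ => ⨅ i, (f i).maxGenEigenspace (χ i)
  have ind₀ : iSupIndep W₀ := Module.End.independent_iInf_maxGenEigenspace_of_forall_mapsTo f
    (fun i j l => Module.End.mapsTo_maxGenEigenspace_of_comm (hf j i) l)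
  have top₀ : ⨆ χ, W₀ χ = ⊤ :=
    Module.End.iSup_iInf_maxGenEigenspace_eq_top_of_iSup_maxGenEigenspace_eq_top_of_commute f
      (fun i j _ => hf i j) (fun i => Module.End.iSup_maxGenEigenspace_eq_top (f i))
  have hW₀ : ∀ χ, W₀ χ = A.maxGenEigenspace (χ 0) ⊓ T.maxGenEigenspace (χ 1) := by
    intro χ
    apply le_antisymm
    · exact le_inf (iInf_le _ 0) (iInf_le _ 1)
    · refine le_iInf fun i => ?_
      fin_cases i
      · exact inf_le_left
      · exact inf_le_right
  letI : Fintype {χ // W₀ χ ≠ ⊥} := ind₀.fintypeNeBotOfFiniteDimensional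
  let W : {χ // W₀ χ ≠ ⊥} → Submodule F V := fun χ => W₀ χ
  have ind : iSupIndep W := ind₀.comp Subtype.val_injective
  have top : ⨆ i, W i = ⊤ := by
    rw [← top₀]
    exact iSup_ne_bot_subtype W₀
  have h0 : ∀ i, W i ≤ T.maxGenEigenspace (i.1 1) := fun i => (hW₀ i).le.trans inf_le_right
  have hA0 : ∀ i, W i ≤ A.maxGenEigenspace (i.1 0) := fun i => (hW₀ i).le.trans inf_le_left
  have h1 : ∀ i, W i ≤ (A * T).maxGenEigenspace (i.1 0 * i.1 1) := fun i =>
    (le_inf (hA0 i) (h0 i)).trans (maxGen_mul_le A T cAT _ _)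
  have h2 : ∀ i, W i ≤ (A * A * T).maxGenEigenspace (i.1 0 * (i.1 0 * i.1 1)) := fun i => by
    rw [mul_assoc]
    exact (le_inf (hA0 i) (h1 i)).trans
      (maxGen_mul_le A (A * T) ((Commute.refl A).mul_right cAT) _ _)
  have inj0 : ∀ S : End F V, Function.Injective S → S.maxGenEigenspace 0 = ⊥ := by
    intro S hS
    rw [eq_bot_iff]
    intro v hv
    rw [Module.End.mem_maxGenEigenspace] at hv
    obtain ⟨k, hk⟩ := hv
    rw [zero_smul, sub_zero] at hk
    have : Function.Injective (S ^ k) := by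
      rw [Module.End.coe_pow]; exact hS.iterate k
    exact this (by rw [hk, map_zero])
  have nz0 : ∀ i : {χ // W₀ χ ≠ ⊥}, i.1 0 ≠ 0 := by
    intro i h
    apply i.2
    have := hA0 i
    rw [h, inj0 A hA] at this
    exact le_bot_iff.mp this
  have nz1 : ∀ i : {χ // W₀ χ ≠ ⊥}, i.1 1 ≠ 0 := by
    intro i h
    apply i.2
    have := h0 i
    rw [h, inj0 T hT] at this
    exact le_bot_iff.mp this
  -- weighted sums
  have D1 := conj_finrank_maxGen hB rB
  have D2 := conj_finrank_maxGen hC rC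
  have key : ∀ c c' : {χ // W₀ χ ≠ ⊥} → F,
      (∀ μ, ∑ i ∈ Finset.univ.filter (fun i => c i = μ), finrank F (W i) =
        ∑ i ∈ Finset.univ.filter (fun i => c' i = μ), finrank F (W i)) →
      ∑ i, (finrank F (W i) : ℚ) * φ (c i) ^ 2 = ∑ i, (finrank F (W i) : ℚ) * φ (c' i) ^ 2 := by
    intro c c' h
    have gen : ∀ d : {χ // W₀ χ ≠ ⊥} → F, (∀ i, d i ∈ Finset.univ.image c ∪ Finset.univ.image c') →
        ∑ i, (finrank F (W i) : ℚ) * φ (d i) ^ 2 =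
        ∑ μ ∈ Finset.univ.image c ∪ Finset.univ.image c',
          ((∑ i ∈ Finset.univ.filter (fun i => d i = μ), finrank F (W i) : ℕ) : ℚ) * φ μ ^ 2 := by
      intro d hd
      rw [← Finset.sum_fiberwise_of_maps_to (g := d) (fun i _ => hd i)]
      refine Finset.sum_congr rfl fun μ _ => ?_
      rw [Nat.cast_sum, Finset.sum_mul]
      refine Finset.sum_congr rfl fun i hi => ?_
      rw [(Finset.mem_filter.mp hi).2]
    rw [gen c (by simp), gen c' (by simp)]
    refine Finset.sum_congr rfl fun μ _ => ?_
    rw [h μ]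
  have E1 := key (fun i => i.1 1) (fun i => i.1 0 * i.1 1) (fun μ => by
    rw [← finrank_maxGen_eq W ind top T _ h0, ← finrank_maxGen_eq W ind top (A * T) _ h1, D1])
  have E2 := key (fun i => i.1 1) (fun i => i.1 0 * (i.1 0 * i.1 1)) (fun μ => by
    rw [← finrank_maxGen_eq W ind top T _ h0, ← finrank_maxGen_eq W ind top (A * A * T) _ h2, D2])
  have tot : ∑ i, (finrank F (W i) : ℚ) * (2 * φ (i.1 0) ^ 2) = 0 := by
    have : ∀ i : {χ // W₀ χ ≠ ⊥}, (finrank F (W i) : ℚ) * (2 * φ (i.1 0) ^ 2) =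
        (finrank F (W i) : ℚ) * φ (i.1 1) ^ 2
        - 2 * ((finrank F (W i) : ℚ) * φ (i.1 0 * i.1 1) ^ 2)
        + (finrank F (W i) : ℚ) * φ (i.1 0 * (i.1 0 * i.1 1)) ^ 2 := by
      intro i
      rw [hφ _ _ (nz0 i) (mul_ne_zero (nz0 i) (nz1 i)), hφ _ _ (nz0 i) (nz1 i)]
      ring
    rw [Finset.sum_congr rfl (fun i _ => this i), Finset.sum_add_distrib, Finset.sum_sub_distrib,
      ← Finset.mul_sum, ← E1, ← E2]
    ring
  rw [Finset.sum_eq_zero_iff_of_nonneg (fun i _ => by positivity)] at tot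
  -- locate `a`
  have hex : ∃ i : {χ // W₀ χ ≠ ⊥}, i.1 0 = a := by
    by_contra hne
    push Not at hne
    have := finrank_maxGen_eq W ind top A _ hA0 a
    rw [Finset.filter_false_of_mem (fun i _ => hne i), Finset.sum_empty,
      Submodule.finrank_eq_zero] at this
    exact ha this
  obtain ⟨i, rfl⟩ := hex
  have := tot i (Finset.mem_univ i)
  have hpos : (finrank F (W i) : ℚ) ≠ 0 := by
    rw [Nat.cast_ne_zero]
    intro h
    exact i.2 (Submodule.finrank_eq_zero.mp h)
  simpa [hpos] using this

/-- A nonzero element of a field killed by all additive functionals is a root of unity. -/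
lemma torsion_of_killed (a : F) (ha : a ≠ 0)
    (h : ∀ φ : F → ℚ, (∀ x y, x ≠ 0 → y ≠ 0 → φ (x * y) = φ x + φ y) → φ a = 0) :
    ∃ n : ℕ, 0 < n ∧ a ^ n = 1 := by
  classical
  by_contra hcon
  push Not at hcon
  let u : Fˣ := Units.mk0 a ha
  let ι : ℤ →+ Additive Fˣ := zmultiplesHom _ (Additive.ofMul u)
  have hι : Function.Injective ι := by
    rw [injective_iff_map_eq_zero]
    intro n hn
    by_contra hn0
    have h1 : u ^ n = 1 := by
      have : Additive.ofMul (u ^ n) = 0 := by simpa [ι] using hn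
      exact this
    have h2 : u ^ n.natAbs = 1 := by
      rcases Int.natAbs_eq n with h | h
      · rw [h] at h1; simpa using h1
      · rw [h] at h1; simpa using h1
    apply hcon n.natAbs (Int.natAbs_pos.mpr hn0)
    have := congrArg Units.val h2
    simpa [u] using this
  obtain ⟨g, hg⟩ := (Module.Baer.of_divisible ℚ).extension_property_addMonoidHom ι hι
    (Int.castAddHom ℚ)
  have := h (fun x => if hx : x = 0 then 0 else g (Additive.ofMul (Units.mk0 x hx))) (by
    intro x y hx hy
    rw [dif_neg hx, dif_neg hy, dif_neg (mul_ne_zero hx hy), ← map_add, ← ofMul_mul,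
      ← Units.mk0_mul])
  rw [dif_neg ha] at this
  have h1 := DFunLike.congr_fun hg 1
  simp [ι, u] at h1
  rw [this] at h1
  exact zero_ne_one h1

lemma exists_pow_unip [IsAlgClosed F] (A T B C : End F V) (cAT : Commute A T)
    (hA : Function.Injective A) (hT : Function.Injective T)
    (hB : Function.Injective B) (hC : Function.Injective C)
    (rB : T * B = B * (A * T)) (rC : T * C = C * (A * A * T)) :
    ∃ N : ℕ, 0 < N ∧ IsNilpotent (A ^ N - 1) := by
  classical
  have tor : ∀ a : {a // A.maxGenEigenspace a ≠ ⊥}, ∃ n : ℕ, 0 < n ∧ a.1 ^ n = 1 := by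
    intro a
    apply torsion_of_killed
    · intro h
      apply a.2
      rw [h, eq_bot_iff]
      intro v hv
      rw [Module.End.mem_maxGenEigenspace] at hv
      obtain ⟨k, hk⟩ := hv
      rw [zero_smul, sub_zero] at hk
      have : Function.Injective (A ^ k) := by
        rw [Module.End.coe_pow]; exact hA.iterate k
      exact this (by rw [hk, map_zero])
    · exact fun φ hφ => eig_killed A T B C cAT hA hT hB hC rB rC φ hφ a.1 a.2
  choose n npos hn using tor
  letI : Fintype {a // A.maxGenEigenspace a ≠ ⊥} :=
    A.independent_maxGenEigenspace.fintypeNeBotOfFiniteDimensional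
  refine ⟨∏ a, n a, Finset.prod_pos fun a _ => npos a, finrank F V, ?_⟩
  set N := ∏ a, n a with hN
  have hpow : ∀ a : {a // A.maxGenEigenspace a ≠ ⊥}, a.1 ^ N = 1 := by
    intro a
    obtain ⟨k, hk⟩ : n a ∣ N := Finset.dvd_prod_of_mem n (Finset.mem_univ a)
    rw [hk, pow_mul, hn, one_pow]
  rw [← LinearMap.ker_eq_top, eq_top_iff, ← Module.End.iSup_maxGenEigenspace_eq_top A]
  refine iSup_le fun a => ?_
  by_cases ha : A.maxGenEigenspace a = ⊥
  · rw [ha]; exact bot_le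
  intro v hv
  rw [Module.End.maxGenEigenspace_eq_genEigenspace_finrank, Module.End.mem_genEigenspace_nat,
    LinearMap.mem_ker] at hv
  have c : Commute A (a • (1 : End F V)) := Algebra.commute_algebraMap_right a A
  have e : A ^ N - 1 = (∑ i ∈ Finset.range N, A ^ i * (a • (1 : End F V)) ^ (N - 1 - i)) *
      (A - a • 1) := by
    rw [c.geom_sum₂_mul, smul_pow, hpow ⟨a, ha⟩, one_smul, one_pow]
  have cQ : Commute (∑ i ∈ Finset.range N, A ^ i * (a • (1 : End F V)) ^ (N - 1 - i))
      (A - a • 1) := by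
    have c' : Commute (a • (1 : End F V)) (A - a • 1) := Algebra.commute_algebraMap_left a _
    refine Commute.sum_left _ _ _ fun i _ => ?_
    exact (((Commute.refl A).sub_right c).pow_left i).mul_left (c'.pow_left _)
  rw [LinearMap.mem_ker, e, cQ.mul_pow, Module.End.mul_apply, hv, map_zero]

end Torsion
section Final
variable {F V : Type*} [Field F] [AddCommGroup V] [Module F V] [FiniteDimensional F V]

lemma unit_inj (A : (End F V)ˣ) : Function.Injective (A : End F V) := by
  intro x y h
  have := congrArg ((A⁻¹ : (End F V)ˣ) : End F V) h
  rwa [← Module.End.mul_apply, ← Module.End.mul_apply, Units.inv_mul] at this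

lemma pow_rel {G : Type*} [Group G] (T B X : G) (h : T * B = B * (X * T)) (c : Commute X T)
    (N : ℕ) : T ^ N * B = B * (X ^ N * T ^ N) := by
  rw [← c.mul_pow]
  exact (SemiconjBy.pow_right (show SemiconjBy B (X * T) T from h.symm) N).symm

open scoped commutatorElement in
lemma exists_word_trivial [IsAlgClosed F] (hn : finrank F V ≤ 4) (A T B C : (End F V)ˣ)
    (cAT : Commute A T) (rB : T * B = B * (A * T)) (rC : T * C = C * (A * A * T)) :
    ∃ N : ℕ, 0 < N ∧ ⁅⁅A ^ N, B * A ^ N * B⁻¹⁆, ⁅A ^ N, C * A ^ N * C⁻¹⁆⁆ = 1 := by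
  have key : ∀ X Y : (End F V)ˣ, X = Y → (X : End F V) = Y := fun X Y h => congrArg _ h
  obtain ⟨N, hN, hnil⟩ := exists_pow_unip (A : End F V) T B C
    (by have := key _ _ cAT.eq; rwa [Units.val_mul, Units.val_mul] at this) (unit_inj A) (unit_inj T) (unit_inj B)
    (unit_inj C) (by have := key _ _ rB; simpa using this)
    (by have := key _ _ rC; simpa using this)
  by_cases two : (2 : F) = 0
  · obtain ⟨k, hk⟩ := hnil
    haveI : CharP F 2 := CharTwo.of_one_ne_zero_of_two_eq_zero one_ne_zero two
    have tE : ((A : End F V) ^ N - 1) ^ (2 ^ k) = 0 :=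
      pow_eq_zero_of_le (Nat.lt_two_pow_self).le hk
    have hone : A ^ (N * 2 ^ k) = 1 := by
      rcases subsingleton_or_nontrivial (End F V) with hs | hs
      · exact Units.ext (Subsingleton.elim _ _)
      · haveI : CharP (End F V) 2 := charP_of_injective_algebraMap (algebraMap F (End F V)).injective 2
        rw [sub_pow_char_pow_of_commute _ _ (Commute.one_right _), one_pow, sub_eq_zero, ← pow_mul] at tE
        exact Units.ext (by simpa using tE)
    refine ⟨N * 2 ^ k, by positivity, ?_⟩
    rw [hone]
    simp
  · refine ⟨N, hN, ?_⟩
    apply word_trivial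
    have rB' := key _ _ (pow_rel T B A rB cAT N)
    have rC' := key _ _ (pow_rel T C (A * A) rC (cAT.mul_left cAT) N)
    rw [(Commute.refl A).mul_pow] at rC'
    have c' := key _ _ (cAT.pow_pow N N).eq
    simp only [Units.val_mul] at rB' rC' c'
    refine flag_global hn two _ (T ^ N : (End F V)ˣ) _ _ c' ?_ (unit_inj _) (unit_inj _) (unit_inj _) rB' rC'
    simpa using hnil
end Final

section Free
open Matrix
open scoped MatrixGroups

lemma upper_pow (N : ℕ) :
    (!![1, 2; 0, 1] : Matrix (Fin 2) (Fin 2) ℤ) ^ N = !![1, 2 * (N : ℤ); 0, 1] := by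
  induction N with
  | zero => ext i j; fin_cases i <;> fin_cases j <;> simp
  | succ n ih =>
    rw [pow_succ, ih]
    ext i j
    fin_cases i <;> fin_cases j <;> simp [Matrix.mul_apply]
    ring

open scoped commutatorElement in
lemma word_ne_one (N : ℕ) (hN : 0 < N) :
    ⁅⁅(FreeGroup.of (0 : Fin 3)) ^ N,
        FreeGroup.of (1 : Fin 3) * FreeGroup.of (0 : Fin 3) ^ N * (FreeGroup.of (1 : Fin 3))⁻¹⁆,
      ⁅(FreeGroup.of (0 : Fin 3)) ^ N,
        FreeGroup.of (2 : Fin 3) * FreeGroup.of (0 : Fin 3) ^ N * (FreeGroup.of (2 : Fin 3))⁻¹⁆⁆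
      ≠ 1 := by
  intro h
  let a : SL(2, ℤ) := ⟨!![1, 2; 0, 1], by simp⟩
  let b : SL(2, ℤ) := ⟨!![0, -1; 1, 0], by simp⟩
  let c : SL(2, ℤ) := ⟨!![1, 0; 1, 1], by simp⟩
  have h2 := congrArg (FreeGroup.lift ![a, b, c]) (commutatorElement_eq_one_iff_mul_comm.mp h)
  simp only [commutatorElement_def, map_mul, map_inv, map_pow, FreeGroup.lift_apply_of] at h2
  have e0 : (![a, b, c] : Fin 3 → SL(2, ℤ)) 0 = a := rfl
  have e1 : (![a, b, c] : Fin 3 → SL(2, ℤ)) 1 = b := rfl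
  have e2 : (![a, b, c] : Fin 3 → SL(2, ℤ)) 2 = c := rfl
  rw [e0, e1, e2] at h2
  obtain ⟨x, hx, hx2⟩ : ∃ x : ℤ, ((a ^ N : SL(2, ℤ)) : Matrix (Fin 2) (Fin 2) ℤ) = !![1, x; 0, 1]
      ∧ 2 ≤ x := ⟨2 * N, by rw [Matrix.SpecialLinearGroup.coe_pow]; exact upper_pow N, by omega⟩
  generalize a ^ N = A at h2 hx
  have hb : (b : Matrix (Fin 2) (Fin 2) ℤ) = !![0, -1; 1, 0] := rfl
  have hc : (c : Matrix (Fin 2) (Fin 2) ℤ) = !![1, 0; 1, 1] := rfl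
  have h3 := congrArg (fun M : SL(2, ℤ) => (M : Matrix (Fin 2) (Fin 2) ℤ) 0 0) h2
  simp only [Matrix.SpecialLinearGroup.coe_mul, Matrix.SpecialLinearGroup.coe_inv, hx, hb, hc,
    Matrix.adjugate_fin_two_of, Matrix.mul_apply, Fin.sum_univ_two, Matrix.adjugate_fin_two,
    Matrix.of_apply, Matrix.cons_val', Matrix.cons_val_zero, Matrix.cons_val_one,
    Matrix.cons_val_fin_one] at h3
  have h4 : x ^ 5 * ((x + 2) * (x - 1)) = 0 := by linear_combination h3
  have : 0 < x ^ 5 * ((x + 2) * (x - 1)) := by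
    have := sub_pos.mpr (show (1 : ℤ) < x by omega)
    positivity
  omega
end Free
end GerstenAux

open scoped MatrixGroups

open scoped commutatorElement in
lemma GerstenAux.no_rep
    (α : MulAut (FreeGroup (Fin 3)))
    (ha : α (FreeGroup.of 0) = FreeGroup.of 0)
    (hb : α (FreeGroup.of 1) = FreeGroup.of 1 * FreeGroup.of 0)
    (hc : α (FreeGroup.of 2) = FreeGroup.of 2 * FreeGroup.of 0 ^ 2)
    (F : Type) [Field F] (d : ℕ) (hd : d ≤ 4)
    (ρ : (FreeGroup (Fin 3) ⋊[zpowersHom (MulAut (FreeGroup (Fin 3))) α]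
          Multiplicative ℤ) →* GL (Fin d) F) (hρ : Function.Injective ρ) : False := by
  let K := AlgebraicClosure F
  let f1 : GL (Fin d) F →* GL (Fin d) K := Matrix.GeneralLinearGroup.map (algebraMap F K)
  have hf1 : Function.Injective f1 := by
    intro x y h
    apply Units.ext
    apply Matrix.map_injective (algebraMap F K).injective
    exact congrArg (fun u : GL (Fin d) K => (u : Matrix (Fin d) (Fin d) K)) h
  let f2 : GL (Fin d) K →* (Module.End K (Fin d → K))ˣ :=
    Units.map (Matrix.toLinAlgEquiv' : Matrix (Fin d) (Fin d) K ≃ₐ[K] _)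
  have hf2 : Function.Injective f2 :=
    Units.map_injective (Matrix.toLinAlgEquiv' : Matrix (Fin d) (Fin d) K ≃ₐ[K] _).injective
  let σ := f2.comp (f1.comp ρ)
  have hσ : Function.Injective σ := hf2.comp (hf1.comp hρ)
  let t : FreeGroup (Fin 3) ⋊[zpowersHom (MulAut (FreeGroup (Fin 3))) α] Multiplicative ℤ :=
    SemidirectProduct.inr (Multiplicative.ofAdd 1)
  let j : FreeGroup (Fin 3) →*
    FreeGroup (Fin 3) ⋊[zpowersHom (MulAut (FreeGroup (Fin 3))) α] Multiplicative ℤ :=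
    SemidirectProduct.inl
  have hj : Function.Injective j := SemidirectProduct.inl_injective
  have rel : ∀ g, t * j g = j (α g) * t := by
    intro g
    have := SemidirectProduct.inl_aut (φ := zpowersHom (MulAut (FreeGroup (Fin 3))) α)
      (Multiplicative.ofAdd 1) g
    rw [zpowersHom_apply, toAdd_ofAdd, zpow_one, map_inv] at this
    show _ = SemidirectProduct.inl (α g) * t
    rw [this, inv_mul_cancel_right]
  have ra := rel (FreeGroup.of 0)
  have rb := rel (FreeGroup.of 1)
  have rc := rel (FreeGroup.of 2)
  rw [ha] at ra
  rw [hb, map_mul, mul_assoc] at rb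
  rw [hc, map_mul, mul_assoc, map_pow, pow_two] at rc
  obtain ⟨N, hN, hw⟩ := GerstenAux.exists_word_trivial (F := K) (V := Fin d → K) (by simpa using hd)
    (σ (j (FreeGroup.of 0))) (σ t) (σ (j (FreeGroup.of 1))) (σ (j (FreeGroup.of 2)))
    (by have := congrArg σ ra.symm; rwa [map_mul, map_mul] at this)
    (by have := congrArg σ rb; simpa only [map_mul] using this)
    (by have := congrArg σ rc; simpa only [map_mul] using this)
  apply GerstenAux.word_ne_one N hN
  apply hj
  apply hσ
  rw [map_one, map_one]
  simpa only [map_commutatorElement, map_mul, map_inv, map_pow] using hw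

/-- The Gersten group `F₃ ⋊_α ℤ` (where `α(a) = a`,
`α(b) = ba`, `α(c) = ca²`, with `a = of 0`, `b = of 1`, `c = of 2`) admits no
injective homomorphism into `GL(4,ℂ)`; consequently it admits no injective
homomorphism into `GL(d,F)` for any field `F` and any `d ≤ 4`. -/
theorem gersten_group_no_faithful_rep_dim_le_four
    (α : MulAut (FreeGroup (Fin 3)))
    (ha : α (FreeGroup.of 0) = FreeGroup.of 0)
    (hb : α (FreeGroup.of 1) = FreeGroup.of 1 * FreeGroup.of 0)
    (hc : α (FreeGroup.of 2) = FreeGroup.of 2 * FreeGroup.of 0 ^ 2) :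
    (¬ ∃ ρ : (FreeGroup (Fin 3) ⋊[zpowersHom (MulAut (FreeGroup (Fin 3))) α]
        Multiplicative ℤ) →* GL (Fin 4) ℂ,
      Function.Injective ρ) ∧
    (∀ (F : Type) [Field F] (d : ℕ), d ≤ 4 →
      ¬ ∃ ρ : (FreeGroup (Fin 3) ⋊[zpowersHom (MulAut (FreeGroup (Fin 3))) α]
          Multiplicative ℤ) →* GL (Fin d) F,
        Function.Injective ρ) := by
  have key := fun (F : Type) [Field F] (d : ℕ) (hd : d ≤ 4) =>
    GerstenAux.no_rep α ha hb hc F d hd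
  refine ⟨?_, ?_⟩
  · rintro ⟨ρ, hρ⟩
    exact key ℂ 4 le_rfl ρ hρ
  · rintro F _ d hd ⟨ρ, hρ⟩
    exact key F d hd ρ hρ
end
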